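/- Let A be a σ-unital non-elementary algebraically simple C*-algebra with QT(A) ≠ ∅, and let a, b ∈ (A⊗K)_+ be such that d_τ(a) < d_τ(b) for all τ ∈ \overline{QT(A)}^w and ω(a) = 0. Then there exist mutually orthogonal nonzero positive contractions b₁, b₀ ∈ Her(b) and 0 < δ < 1/4 such that d_τ(a) < d_τ(f_δ(b₁)) for all τ ∈ \overline{QT(A)}^w. -/

import Mathlib

open scoped ENNReal
open Filter Topology

noncomputable section

namespace Paper

/-! ### Generic definitions in a (non-unital) C*-algebra -/

variable (R : Type*) [NonUnitalCStarAlgebra R] [PartialOrder R] [StarOrderedRing R]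

variable {R} in
/-- The hereditary C*-subalgebra generated by `b`, i.e. `closure (b R b)`. -/
def her (b : R) : Set R := closure {x : R | ∃ y : R, x = b * y * b}

/-- `I` is a (not necessarily closed) two-sided ideal of the subalgebra `B`. -/
def IsIdealIn (B I : Set R) : Prop :=
  I ⊆ B ∧ (0 : R) ∈ I ∧ (∀ x ∈ I, ∀ y ∈ I, x + y ∈ I) ∧ (∀ x ∈ I, -x ∈ I) ∧
    (∀ x ∈ I, ∀ b ∈ B, x * b ∈ I ∧ b * x ∈ I)

variable {R} in
/-- The Pedersen ideal of the subalgebra `B`: the minimal dense two-sided ideal of `B`,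
equivalently the intersection of all dense two-sided ideals of `B`. -/
def pedersenIn (B : Set R) : Set R :=
  ⋂ I ∈ {I : Set R | IsIdealIn R B I ∧ B ⊆ closure I}, I

/-- The Pedersen ideal of `R`. -/
def pedersen : Set R := pedersenIn (Set.univ : Set R)

variable {R} in
/-- Cuntz subequivalence `a ≲ b`. -/
def CuntzLE (a b : R) : Prop :=
  ∃ x : ℕ → R, Tendsto (fun n => ‖a - star (x n) * b * x n‖) atTop (𝓝 0)

variable {R} in
/-- Cuntz subequivalence relative to a subset `B` (the `xₙ` are taken in `B`). -/
def CuntzLEIn (B : Set R) (a b : R) : Prop :=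
  ∃ x : ℕ → R, (∀ n, x n ∈ B) ∧ Tendsto (fun n => ‖a - star (x n) * b * x n‖) atTop (𝓝 0)

variable {R} in
/-- Cuntz equivalence `a ∼ b`. -/
def CuntzEq (a b : R) : Prop := CuntzLE a b ∧ CuntzLE b a

/-- The cut-off function `f_ε`: `0` on `[0, ε/2]`, `1` on `[ε, ∞)`, linear in between. -/
def cutoff (ε : ℝ) : ℝ → ℝ := fun t => min 1 (max 0 (2 * t / ε - 1))

variable {R} in
/-- `f_ε(a)`, via the (non-unital) continuous functional calculus. -/
def fEps (ε : ℝ) (a : R) : R := cfcₙ (cutoff ε) a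

/-- A densely defined 2-quasitrace on `R` (recorded by its values on positive elements;
the value on non-positive elements is normalised to `0`). -/
structure QuasiTrace : Type _ where
  toFun : R → ℝ≥0∞
  zero_of_not_nonneg : ∀ a : R, ¬ (0 ≤ a) → toFun a = 0
  map_zero : toFun 0 = 0
  map_smul : ∀ (r : ℝ) (a : R), 0 < r → 0 ≤ a → toFun (r • a) = ENNReal.ofReal r * toFun a
  map_add_of_commute : ∀ a b : R, 0 ≤ a → 0 ≤ b → a * b = b * a →
    toFun (a + b) = toFun a + toFun b
  map_star_mul_self : ∀ x : R, toFun (star x * x) = toFun (x * star x)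
  lowerSemicontinuousOn : LowerSemicontinuousOn toFun {a : R | 0 ≤ a}
  finite_on_pedersen : ∀ a ∈ pedersen R, 0 ≤ a → toFun a < ∞
  exists_matrix_extension : ∃ σ : Matrix (Fin 2) (Fin 2) R → ℝ≥0∞,
    (∀ a : R, σ (fun i j => if i = 0 ∧ j = 0 then a else 0) = toFun a) ∧
    σ 0 = 0 ∧
    (∀ (r : ℝ) (x : Matrix (Fin 2) (Fin 2) R), 0 < r → (∃ y, x = star y * y) →
      σ (r • x) = ENNReal.ofReal r * σ x) ∧
    (∀ x y : Matrix (Fin 2) (Fin 2) R, (∃ z, x = star z * z) → (∃ z, y = star z * z) →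
      x * y = y * x → σ (x + y) = σ x + σ y) ∧
    (∀ x : Matrix (Fin 2) (Fin 2) R, σ (star x * x) = σ (x * star x))

/-- The topology of pointwise convergence on the Pedersen ideal. -/
instance : TopologicalSpace (QuasiTrace R) :=
  TopologicalSpace.induced (fun τ => fun a : pedersen R => τ.toFun a) inferInstance

variable {R}

/-- The zero quasitrace. -/
def QuasiTrace.IsZero (τ : QuasiTrace R) : Prop := ∀ a : R, τ.toFun a = 0

/-- The dimension function `d_τ(a) = lim_{ε → 0} τ(f_ε(a))`. -/
def dTau (τ : QuasiTrace R) (a : R) : ℝ≥0∞ :=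
  ⨆ n : ℕ, τ.toFun (fEps (1 / (n + 1)) a)

/-- `ω(a)` relative to a set `S` of quasitraces:
`lim_n sup {d_τ(a) - τ(f_{1/n}(a)) : τ ∈ S}`. -/
def omegaOn (S : Set (QuasiTrace R)) (a : R) : ℝ≥0∞ :=
  ⨅ n : ℕ, ⨆ τ ∈ S, (dTau τ a - τ.toFun (fEps (1 / (n + 1)) a))

/-- The seminorm `‖x‖_{2,S}`. -/
def norm2On (S : Set (QuasiTrace R)) (x : R) : ℝ≥0∞ :=
  ⨆ τ ∈ S, (τ.toFun (star x * x)) ^ (1 / 2 : ℝ)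

variable (R)

/-- `R` has (Blackadar's) strict comparison. -/
def StrictComparison : Prop :=
  ∀ a b : R, 0 ≤ a → 0 ≤ b →
    (∀ τ : QuasiTrace R, ¬ τ.IsZero → dTau τ a < dTau τ b) → CuntzLE a b

/-- `R` is a simple C*-algebra: it is nonzero and has no nontrivial closed two-sided ideals. -/
def IsSimpleCStar : Prop :=
  (∃ x : R, x ≠ 0) ∧
    ∀ I : TwoSidedIdeal R, IsClosed (I : Set R) → (I : Set R) = {0} ∨ (I : Set R) = Set.univ

/-- `R` is σ-unital: it contains a strictly positive element `h`
(equivalently, `Her(h) = R`). -/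
def SigmaUnital : Prop := ∃ h : R, 0 ≤ h ∧ her h = Set.univ

/-- `R` is elementary: isomorphic to the algebra of compact operators on some Hilbert space. -/
def IsElementary : Prop :=
  ∃ (H : Type) (_ : NormedAddCommGroup H) (_ : InnerProductSpace ℂ H) (_ : CompleteSpace H)
    (φ : R →⋆ₙₐ[ℂ] (H →L[ℂ] H)), Function.Injective φ ∧
      Set.range φ = {T : H →L[ℂ] H | IsCompactOperator (⇑T)}

/-- `R` is purely infinite: `R ≇ ℂ` and `b ≲ a` for all nonzero positive `a, b`. -/
def PurelyInfinite : Prop :=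
  (¬ ∃ φ : R →⋆ₙₐ[ℂ] ℂ, Function.Bijective φ) ∧
    ∀ a b : R, 0 ≤ a → 0 ≤ b → a ≠ 0 → b ≠ 0 → CuntzLE b a

/-- `R` is finite: its minimal unitization contains no non-unitary isometry. -/
def IsFiniteCStar : Prop :=
  ∀ v : Unitization ℂ R, star v * v = 1 → v * star v = 1

/-- `R` has stable rank one: the invertible elements are dense in the minimal unitization. -/
def StableRankOne : Prop := Dense {x : Unitization ℂ R | IsUnit x}

variable {R}

/-- `c` represents `n·[a]` in the Cuntz semigroup: it is the sum of `n` mutually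
orthogonal positive elements, each Cuntz equivalent to `a`. -/
def IsNFoldRep (n : ℕ) (a c : R) : Prop :=
  ∃ f : Fin n → R, (∀ i, 0 ≤ f i) ∧ (∀ i, CuntzEq (f i) a) ∧
    (∀ i j, i ≠ j → f i * f j = 0) ∧ c = ∑ i, f i

/-- `s` represents the supremum of the increasing sequence of Cuntz classes `[y n]`. -/
def IsCuntzLUB (y : ℕ → R) (s : R) : Prop :=
  (∀ n, CuntzLE (y n) s) ∧ ∀ c : R, 0 ≤ c → (∀ n, CuntzLE (y n) c) → CuntzLE s c

/-- `[x] ≪ [y]` in the Cuntz semigroup. -/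
def CuntzWayBelow (x y : R) : Prop :=
  ∀ yseq : ℕ → R, (∀ n, 0 ≤ yseq n) → (∀ n, CuntzLE (yseq n) (yseq (n + 1))) →
    ∀ s : R, 0 ≤ s → IsCuntzLUB yseq s → CuntzLE y s → ∃ n₀, CuntzLE x (yseq n₀)

variable (R)

/-- The Cuntz semigroup of `R` is almost unperforated. -/
def AlmostUnperforated : Prop :=
  ∀ (a b : R) (k : ℕ), 1 ≤ k → 0 ≤ a → 0 ≤ b →
    (∃ c d : R, IsNFoldRep (k + 1) a c ∧ IsNFoldRep k b d ∧ CuntzLE c d) → CuntzLE a b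

/-- The Cuntz semigroup of `R` is almost divisible. -/
def AlmostDivisible : Prop :=
  ∀ x y : R, 0 ≤ x → 0 ≤ y → CuntzWayBelow x y → ∀ n : ℕ, 1 ≤ n →
    ∃ z : R, 0 ≤ z ∧ (∃ c : R, IsNFoldRep n z c ∧ CuntzLE c y) ∧
      (∃ c : R, IsNFoldRep (n + 1) z c ∧ CuntzLE x c)

/-! ### The stabilization `W ≅ A ⊗ K` -/

variable (A W : Type*) [NonUnitalCStarAlgebra A] [PartialOrder A] [StarOrderedRing A]
  [NonUnitalCStarAlgebra W] [PartialOrder W] [StarOrderedRing W]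

/-- A realization of `W` as the stabilization `A ⊗ K`: the maps `emb i j : a ↦ a ⊗ e_{ij}`
are isometric, satisfy the matrix-unit relations, and have dense joint linear span. -/
structure Stabilization : Type _ where
  emb : ℕ → ℕ → (A →ₗ[ℂ] W)
  emb_mul : ∀ (i j k l : ℕ) (a b : A),
    emb i j a * emb k l b = if j = k then emb i l (a * b) else 0
  emb_star : ∀ (i j : ℕ) (a : A), star (emb i j a) = emb j i (star a)
  norm_emb : ∀ (i j : ℕ) (a : A), ‖emb i j a‖ = ‖a‖
  dense_span : Dense (Submodule.span ℂ {w : W | ∃ (i j : ℕ) (a : A), w = emb i j a} : Set W)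

variable {A W}

/-- The set `QT(A)` of quasitraces normalized on `A ⊆ A ⊗ K`. -/
def QTSet (SB : Stabilization A W) : Set (QuasiTrace W) :=
  {τ | (⨆ a : {a : A // 0 ≤ a ∧ ‖a‖ ≤ 1}, τ.toFun (SB.emb 0 0 a)) = 1}

/-- The quasitraces normalized on the hereditary subalgebra `Her(c) ⊆ W`. -/
def QTSetHer (c : W) : Set (QuasiTrace W) :=
  {τ : QuasiTrace W |
    (⨆ a : {a : W // a ∈ her c ∧ 0 ≤ a ∧ ‖a‖ ≤ 1}, τ.toFun a) = 1}

/-- `ω(a) = 0` for `a ∈ W = A ⊗ K`, computed relative to `\overline{QT(Her(e))}^w`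
for any nonzero `e ∈ Ped(A)₊`. -/
def OmegaZero (SB : Stabilization A W) (a : W) : Prop :=
  ∀ e : A, 0 ≤ e → e ≠ 0 → e ∈ pedersen A →
    omegaOn (closure (QTSetHer (SB.emb 0 0 e))) a = 0

/-- `A` has tracial approximate oscillation zero. -/
def TAOZ (SB : Stabilization A W) : Prop :=
  ∀ e : A, 0 ≤ e → e ≠ 0 → e ∈ pedersen A →
    ∀ a : W, 0 ≤ a → a ∈ pedersen W →
      ∃ b : ℕ → W, (∀ n, 0 ≤ b n) ∧ (∀ n, ‖b n‖ ≤ 1) ∧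
        (∀ n, b n ∈ pedersenIn (her a)) ∧
        Tendsto (fun n => omegaOn (closure (QTSetHer (SB.emb 0 0 e))) (b n)) atTop (𝓝 0) ∧
        Tendsto (fun n => norm2On (closure (QTSetHer (SB.emb 0 0 e))) (a - b n)) atTop (𝓝 0)

/-! ### Affine functions on the quasitrace cone and the map `Γ` -/

variable (W) in
/-- `ρ = t·τ + (1-t)·σ` as quasitraces. -/
def IsCombo (t : ℝ) (τ σ ρ : QuasiTrace W) : Prop :=
  ∀ a : W, 0 ≤ a →
    ρ.toFun a = ENNReal.ofReal t * τ.toFun a + ENNReal.ofReal (1 - t) * σ.toFun a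

variable (W) in
/-- `f` is affine on the quasitrace cone. -/
def IsAffineQT (f : QuasiTrace W → ℝ≥0∞) : Prop :=
  ∀ t : ℝ, 0 ≤ t → t ≤ 1 → ∀ τ σ ρ : QuasiTrace W, IsCombo W t τ σ ρ →
    f ρ = ENNReal.ofReal t * f τ + ENNReal.ofReal (1 - t) * f σ

variable (W) in
/-- Membership in `Aff₊(QT̃(A))`. -/
def MemAffPlus (f : QuasiTrace W → ℝ≥0∞) : Prop :=
  (∀ τ, f τ = 0) ∨
    (Continuous f ∧ IsAffineQT W f ∧ (∀ τ, f τ < ∞) ∧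
      (∀ τ : QuasiTrace W, ¬ τ.IsZero → 0 < f τ) ∧
      (∀ τ : QuasiTrace W, τ.IsZero → f τ = 0))

variable (W) in
/-- Membership in `LAff₊(QT̃(A))`. -/
def MemLAffPlus (f : QuasiTrace W → ℝ≥0∞) : Prop :=
  ∃ g : ℕ → QuasiTrace W → ℝ≥0∞, (∀ n, MemAffPlus W (g n)) ∧
    (∀ n τ, g n τ ≤ g (n + 1) τ) ∧ ∀ τ, f τ = ⨆ n, g n τ

variable (W) in
/-- The canonical map `Γ : Cu(A) → LAff₊(QT̃(A))`, `Γ([a])(τ) = d_τ(a)`, is surjective. -/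
def GammaSurjective : Prop :=
  ∀ f : QuasiTrace W → ℝ≥0∞, MemLAffPlus W f →
    ∃ a : W, 0 ≤ a ∧ ∀ τ : QuasiTrace W, dTau τ a = f τ

/-!
The closure of `QT(A)` is compact: limits along ultrafilters, made lower semicontinuous by
`τ(x) = sup_ε lim τᵢ((x - ε)₊)`, remain densely defined because `d_τ(x)` is bounded in `τ ∈ QT(A)`
for each `x ∈ Ped(A ⊗ K)₊`. When `ω(a) = 0` the strict inequality `d_τ(a) < d_τ(b)` is therefore
uniform: for some `ε, κ > 0`, `d_τ(a) + κ ≤ τ(f_ε(b))` on the closure.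

In a simple non-elementary algebra every nonzero hereditary subalgebra contains a nonzero element
`u` with `u² = 0`. The elements `u* u` and `u u*` are orthogonal and of equal dimension, so
iterating gives a norm-one `d ≥ 0` under `f_ε(b)` with `d_τ(d) ≤ κ / 3` on the closure. With
`e = f_{ε/2}(b)`, the elements `b₁ = e - f_{1/2}(d)` and `b₀ = f_1(d)` are orthogonal and
`τ(b₁) ≥ d_τ(a) + 2κ / 3`. Since `d_τ(e)` is bounded on the closure, cutting `b₁` down to
`f_δ(b₁)` loses at most `κ / 3` for small `δ`.
-/

/-! ### Continuous functional calculus -/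

variable {R}

open scoped ContinuousMapZero in
lemma semiconjBy_cfcₙ {B : Type*} [NonUnitalCStarAlgebra B] {x a b : B} (hx : SemiconjBy x a b)
    (ha : IsSelfAdjoint a) (hb : IsSelfAdjoint b) {f : ℝ → ℝ} (hf : Continuous f)
    (hf0 : f 0 = 0) : SemiconjBy x (cfcₙ f a) (cfcₙ f b) := by
  let s : Set ℝ := quasispectrum ℝ a ∪ quasispectrum ℝ b
  have has : quasispectrum ℝ a ⊆ s := Set.subset_union_left
  have hbs : quasispectrum ℝ b ⊆ s := Set.subset_union_right
  have : Fact (0 ∈ s) := ⟨has (quasispectrum.zero_mem ℝ a)⟩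
  have : CompactSpace s := isCompact_iff_compactSpace.mp
    ((NonUnitalContinuousFunctionalCalculus.isCompact_quasispectrum a).union
      (NonUnitalContinuousFunctionalCalculus.isCompact_quasispectrum b))
  have key (F : C(s, ℝ)₀) :
      SemiconjBy x (cfcₙHomSuperset ha has F) (cfcₙHomSuperset hb hbs F) := by
    induction F using ContinuousMapZero.induction_on_of_compact with
    | zero => simpa only [map_zero] using SemiconjBy.zero_right x
    | smul r F hF => simpa only [map_smul] using hF.smul_right r
    | id => simpa only [cfcₙHomSuperset_id]
    | star_id => simpa only [map_star, cfcₙHomSuperset_id, ha.star_eq, hb.star_eq]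
    | add F G hF hG => simpa only [map_add] using hF.add_right hG
    | mul F G hF hG => simpa only [map_mul] using hF.mul_right hG
    | frequently F hF =>
      have hclosed : IsClosed {F : C(s, ℝ)₀ |
          x * cfcₙHomSuperset ha has F = cfcₙHomSuperset hb hbs F * x} :=
        isClosed_eq (continuous_const.mul (cfcₙHomSuperset_continuous ha has))
          ((cfcₙHomSuperset_continuous hb hbs).mul continuous_const)
      exact hclosed.closure_subset (mem_closure_iff_frequently.mpr hF)
  rw [cfcₙ_apply f a hf.continuousOn hf0 ha, cfcₙ_apply f b hf.continuousOn hf0 hb]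
  exact key ⟨⟨_, hf.continuousOn.domRestrict⟩, hf0⟩

lemma exists_continuous_mul_eq {f : ℝ → ℝ} (hf : Continuous f) {ε : ℝ} (hε : 0 < ε)
    (hfε : ∀ t ≤ ε, f t = 0) :
    ∃ g : ℝ → ℝ, Continuous g ∧ g 0 = 0 ∧ (∀ t, 0 ≤ f t → 0 ≤ g t) ∧ ∀ t, t * g t = f t := by
  have hmax (t : ℝ) : 0 < max t ε := lt_max_of_lt_right hε
  refine ⟨fun t ↦ f t / max t ε, hf.div (by fun_prop) fun t ↦ (hmax t).ne', by
    simp [hfε 0 hε.le], fun t ht ↦ div_nonneg ht (hmax t).le, fun t ↦ ?_⟩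
  rcases le_or_gt t ε with ht | ht
  · simp [hfε t ht]
  · simp only [max_eq_left ht.le]
    exact mul_div_cancel₀ _ (hε.trans ht).ne'

lemma exists_star_mul_self_eq_cfcₙ {B : Type*} [NonUnitalCStarAlgebra B] (y : B) {f : ℝ → ℝ}
    (hf : Continuous f) {ε : ℝ} (hε : 0 < ε) (hfε : ∀ t ≤ ε, f t = 0) (hf0 : ∀ t, 0 ≤ f t) :
    ∃ w : B, star w * w = cfcₙ f (star y * y) ∧ w * star w = cfcₙ f (y * star y) := by
  obtain ⟨g, hg, hg0, hgn, hfg⟩ := exists_continuous_mul_eq hf hε hfε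
  let k : ℝ → ℝ := fun t ↦ √(g t)
  have hk : Continuous k := hg.sqrt
  have hk0 : k 0 = 0 := by simp [k, hg0]
  have hfk : f = fun t ↦ k t * t * k t := by
    ext t
    rw [← hfg t, mul_right_comm, Real.mul_self_sqrt (hgn t (hf0 t)), mul_comm]
  have hcfc {a : B} (ha : IsSelfAdjoint a) : cfcₙ f a = cfcₙ k a * a * cfcₙ k a := by
    rw [hfk, cfcₙ_mul (fun t ↦ k t * t) k _ (by fun_prop) (by simp) (by fun_prop) hk0,
      cfcₙ_mul k (fun t ↦ t) _ (by fun_prop) hk0 (by fun_prop) rfl, cfcₙ_id' ℝ a ha]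
  have hka (a : B) : star (cfcₙ k a) = cfcₙ k a := IsSelfAdjoint.star_eq (cfcₙ_predicate k a)
  have hsemi : y * cfcₙ k (star y * y) = cfcₙ k (y * star y) * y :=
    semiconjBy_cfcₙ (mul_assoc y (star y) y).symm (.star_mul_self y) (.mul_star_self y) hk hk0
  refine ⟨y * cfcₙ k (star y * y), ?_, ?_⟩
  · rw [hcfc (.star_mul_self y), star_mul, hka]
    simp only [mul_assoc]
  · rw [hcfc (.mul_star_self y), hsemi, star_mul, hka]
    simp only [mul_assoc]

section Joint

open ComplexStarModule Complex

lemma exists_isStarNormal_of_commute {B : Type*} [NonUnitalCStarAlgebra B] {x y : B}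
    (hx : IsSelfAdjoint x) (hy : IsSelfAdjoint y) (hxy : Commute x y) :
    ∃ z : B, IsStarNormal z ∧ (ℜ z : B) = x ∧ (ℑ z : B) = y := by
  have hre : (ℜ (x + I • y) : B) = x := by simp [realPart_I_smul, hx.coe_realPart, hy.imaginaryPart]
  have him : (ℑ (x + I • y) : B) = y := by
    simp [imaginaryPart_I_smul, hy.coe_realPart, hx.imaginaryPart]
  refine ⟨x + I • y, isStarNormal_iff_commute_realPart_imaginaryPart.mpr ?_, hre, him⟩
  rwa [hre, him]

lemma cfcₙ_comp_re_add_im {B : Type*} [NonUnitalCStarAlgebra B] {z : B} (hz : IsStarNormal z)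
    {f : ℝ → ℝ} (hf : Continuous f) (hf0 : f 0 = 0) :
    cfcₙ (fun w : ℂ ↦ (f (w.re + w.im) : ℂ)) z = cfcₙ f (ℜ z + ℑ z : B) := by
  have hsum : cfcₙ (fun w : ℂ ↦ ((w.re + w.im : ℝ) : ℂ)) z = (ℜ z + ℑ z : B) := by
    simp only [ofReal_add]
    rw [cfcₙ_add (fun w : ℂ ↦ (w.re : ℂ)) (fun w : ℂ ↦ (w.im : ℂ)) z, cfcₙ_re_id z, cfcₙ_im_id z]
  rw [cfcₙ_real_eq_complex f ((ℜ z).2.add (ℑ z).2), ← hsum,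
    ← cfcₙ_comp' (fun w : ℂ ↦ (f w.re : ℂ)) (fun w : ℂ ↦ ((w.re + w.im : ℝ) : ℂ)) z
      (by fun_prop) (by simp [hf0])]
  simp only [ofReal_re]

lemma quasispectrum_re_im_nonneg {z : R} (hz : IsStarNormal z) (hre : 0 ≤ (ℜ z : R))
    (him : 0 ≤ (ℑ z : R)) {w : ℂ} (hw : w ∈ quasispectrum ℂ z) : 0 ≤ w.re ∧ 0 ≤ w.im :=
  ⟨quasispectrum_nonneg_of_nonneg _ hre _ (quasispectrum_realPart' z ▸ Set.mem_image_of_mem _ hw),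
    quasispectrum_nonneg_of_nonneg _ him _
      (quasispectrum_imaginaryPart' z ▸ Set.mem_image_of_mem _ hw)⟩

open scoped ComplexOrder in
lemma cfcₙ_add_le_add_of_commute {x y : R} (hx : 0 ≤ x) (hy : 0 ≤ y) (hxy : Commute x y)
    {f g h : ℝ → ℝ} (hf : Continuous f) (hf0 : f 0 = 0) (hg : Continuous g) (hg0 : g 0 = 0)
    (hh : Continuous h) (hh0 : h 0 = 0) (hle : ∀ s t, 0 ≤ s → 0 ≤ t → h (s + t) ≤ f s + g t) :
    cfcₙ h (x + y) ≤ cfcₙ f x + cfcₙ g y := by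
  obtain ⟨z, hz, rfl, rfl⟩ := exists_isStarNormal_of_commute (.of_nonneg hx) (.of_nonneg hy) hxy
  rw [← cfcₙ_comp_re_add_im hz hh hh0, ← cfcₙ_comp_re f z, ← cfcₙ_comp_im g z,
    ← cfcₙ_add (fun w : ℂ ↦ (f w.re : ℂ)) (fun w : ℂ ↦ (g w.im : ℂ)) z (by fun_prop)
      (by simp [hf0]) (by fun_prop) (by simp [hg0])]
  refine cfcₙ_mono (fun w hw ↦ ?_) (by fun_prop) (by fun_prop) (by simp [hh0]) (by simp [hf0, hg0])
  obtain ⟨hr, hi⟩ := quasispectrum_re_im_nonneg hz hx hy hw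
  exact_mod_cast hle _ _ hr hi

lemma add_cfcₙ_le_cfcₙ_add_of_commute {x y : R} (hx : 0 ≤ x) (hy : 0 ≤ y) (hxy : Commute x y)
    {f g h : ℝ → ℝ} (hf : Continuous f) (hf0 : f 0 = 0) (hg : Continuous g) (hg0 : g 0 = 0)
    (hh : Continuous h) (hh0 : h 0 = 0) (hle : ∀ s t, 0 ≤ s → 0 ≤ t → f s + g t ≤ h (s + t)) :
    cfcₙ f x + cfcₙ g y ≤ cfcₙ h (x + y) := by
  have := cfcₙ_add_le_add_of_commute hx hy hxy (f := -f) (g := -g) (h := -h)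
    hf.neg (by simp [hf0]) hg.neg (by simp [hg0]) hh.neg (by simp [hh0])
    fun s t hs ht ↦ by simpa using by linarith [hle s t hs ht]
  have hneg (f : ℝ → ℝ) (a : R) : cfcₙ (-f) a = -cfcₙ f a := cfcₙ_neg f a
  simpa only [hneg, ← neg_add, neg_le_neg_iff] using this

lemma mul_eq_zero_comm_of_nonneg {x y : R} (hx : 0 ≤ x) (hy : 0 ≤ y) (hxy : x * y = 0) :
    y * x = 0 := by
  simpa [(IsSelfAdjoint.of_nonneg hx).star_eq, (IsSelfAdjoint.of_nonneg hy).star_eq]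
    using congrArg star hxy

lemma cfcₙ_add_of_mul_eq_zero {x y : R} (hx : 0 ≤ x) (hy : 0 ≤ y) (hxy : x * y = 0) {f : ℝ → ℝ}
    (hf : Continuous f) (hf0 : f 0 = 0) : cfcₙ f (x + y) = cfcₙ f x + cfcₙ f y := by
  obtain ⟨z, hz, rfl, rfl⟩ := exists_isStarNormal_of_commute (.of_nonneg hx) (.of_nonneg hy)
    (hxy.trans (mul_eq_zero_comm_of_nonneg hx hy hxy).symm)
  have hprod : cfcₙ (fun w : ℂ ↦ (w.re : ℂ) * (w.im : ℂ)) z = cfcₙ (fun _ : ℂ ↦ 0) z := by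
    rw [cfcₙ_mul (fun w : ℂ ↦ (w.re : ℂ)) (fun w : ℂ ↦ (w.im : ℂ)) z, cfcₙ_re_id z, cfcₙ_im_id z,
      hxy, cfcₙ_const_zero]
  have hspec := eqOn_of_cfcₙ_eq_cfcₙ hprod hz (by fun_prop) (by simp) (by fun_prop) rfl
  rw [← cfcₙ_comp_re_add_im hz hf hf0, ← cfcₙ_comp_re f z, ← cfcₙ_comp_im f z,
    ← cfcₙ_add (fun w : ℂ ↦ (f w.re : ℂ)) (fun w : ℂ ↦ (f w.im : ℂ)) z (by fun_prop)
      (by simp [hf0]) (by fun_prop) (by simp [hf0])]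
  refine cfcₙ_congr fun w hw ↦ ?_
  rcases mul_eq_zero.mp (hspec hw) with h | h <;> simp [ofReal_eq_zero.mp h, hf0]

end Joint

lemma commute_cfcₙ_cfcₙ {B : Type*} [NonUnitalCStarAlgebra B] {x y : B} (h : Commute x y)
    (f g : ℝ → ℝ) : Commute (cfcₙ f x) (cfcₙ g y) :=
  ((h.cfcₙ_real f).symm.cfcₙ_real g).symm

lemma mem_Icc_of_mem_quasispectrum {x : R} (hx : 0 ≤ x) {t : ℝ} (ht : t ∈ quasispectrum ℝ x) :
    t ∈ Set.Icc 0 ‖x‖ :=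
  ⟨quasispectrum_nonneg_of_nonneg x hx t ht, (le_abs_self t).trans
    (NonUnitalIsometricContinuousFunctionalCalculus.norm_quasispectrum_le x ht)⟩

lemma norm_cfcₙ_sub_le {x : R} (hx : 0 ≤ x) {f : ℝ → ℝ} {C : ℝ} (hf : Continuous f)
    (hf0 : f 0 = 0) (h : ∀ t, 0 ≤ t → |f t - t| ≤ C) : ‖cfcₙ f x - x‖ ≤ C := by
  nth_rw 2 [← cfcₙ_id' ℝ x]
  rw [← cfcₙ_sub f (fun t ↦ t) x hf.continuousOn hf0]
  exact norm_cfcₙ_le fun t ht ↦ h t (mem_Icc_of_mem_quasispectrum hx ht).1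

lemma cfcₙ_mul_cfcₙ_eq_right {x : R} (hx : 0 ≤ x) {u g : ℝ → ℝ} (hu : Continuous u)
    (hu0 : u 0 = 0) (hg : Continuous g) (hg0 : g 0 = 0)
    (h : ∀ t, 0 ≤ t → t ≤ ‖x‖ → u t * g t = g t) : cfcₙ u x * cfcₙ g x = cfcₙ g x := by
  rw [← cfcₙ_mul u g x hu.continuousOn hu0 hg.continuousOn hg0]
  exact cfcₙ_congr fun t ht ↦ (mem_Icc_of_mem_quasispectrum hx ht).elim (h t)

lemma exists_cfcₙ_eq_mul_cfcₙ {B : Type*} [NonUnitalCStarAlgebra B] {x : B}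
    (hx : IsSelfAdjoint x) {f : ℝ → ℝ} (hf : Continuous f) {ε : ℝ} (hε : 0 < ε)
    (hfε : ∀ t ≤ ε, f t = 0) : ∃ g : ℝ → ℝ, cfcₙ f x = x * cfcₙ g x := by
  obtain ⟨g, hg, hg0, -, hfg⟩ := exists_continuous_mul_eq hf hε hfε
  refine ⟨g, ?_⟩
  nth_rw 2 [← cfcₙ_id' ℝ x]
  rw [← cfcₙ_mul (fun t ↦ t) g x (by fun_prop) rfl hg.continuousOn hg0]
  simp only [hfg]

lemma mul_self_le_self_of_nonneg {e : R} (he : 0 ≤ e) (he1 : ‖e‖ ≤ 1) : e * e ≤ e := by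
  have hcfc : e * e = cfcₙ (fun t : ℝ ↦ t * t) e := by
    rw [cfcₙ_mul (fun t ↦ t) (fun t ↦ t) e, cfcₙ_id' ℝ e]
  nth_rw 3 [← cfcₙ_id' ℝ e]
  rw [hcfc]
  refine cfcₙ_mono fun t ht ↦ ?_
  obtain ⟨ht0, ht1⟩ := mem_Icc_of_mem_quasispectrum he ht
  exact mul_le_of_le_one_left ht0 (ht1.trans he1)

lemma mul_cfcₙ_eq_of_mul_eq {B : Type*} [NonUnitalCStarAlgebra B] {x e : B}
    (hx : IsSelfAdjoint x) (he : e * x = x) {f : ℝ → ℝ} (hf : Continuous f) {ε : ℝ} (hε : 0 < ε)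
    (hfε : ∀ t ≤ ε, f t = 0) : e * cfcₙ f x = cfcₙ f x := by
  obtain ⟨g, hg⟩ := exists_cfcₙ_eq_mul_cfcₙ hx hf hε hfε
  rw [hg, ← mul_assoc, he]

/-! ### Cut-offs and cut-downs of positive elements -/

lemma continuous_cutoff (ε : ℝ) : Continuous (cutoff ε) := by unfold cutoff; fun_prop

lemma cutoff_zero (ε : ℝ) : cutoff ε 0 = 0 := by simp [cutoff]

lemma cutoff_nonneg (ε t : ℝ) : 0 ≤ cutoff ε t := le_min zero_le_one (le_max_left _ _)

lemma cutoff_le_one (ε t : ℝ) : cutoff ε t ≤ 1 := min_le_left _ _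

lemma cutoff_eq_one_of_le {ε t : ℝ} (hε : 0 < ε) (h : ε ≤ t) : cutoff ε t = 1 := by
  have : 1 ≤ 2 * t / ε - 1 := by rw [le_sub_iff_add_le, le_div_iff₀ hε]; linarith
  exact min_eq_left (le_max_of_le_right this)

lemma cutoff_eq_zero_of_le {ε t : ℝ} (hε : 0 < ε) (h : t ≤ ε / 2) : cutoff ε t = 0 := by
  have : 2 * t / ε - 1 ≤ 0 := by rw [sub_nonpos, div_le_iff₀ hε]; linarith
  rw [cutoff, max_eq_left this, min_eq_right zero_le_one]

lemma cutoff_anti {ε δ t : ℝ} (hδ : 0 < δ) (h : δ ≤ ε) (ht : 0 ≤ t) : cutoff ε t ≤ cutoff δ t := by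
  unfold cutoff
  gcongr

lemma cutoff_half_mul_cutoff {ε : ℝ} (hε : 0 < ε) (t : ℝ) :
    cutoff (ε / 2) t * cutoff ε t = cutoff ε t := by
  rcases le_total t (ε / 2) with h | h
  · rw [cutoff_eq_zero_of_le hε h, mul_zero]
  · rw [cutoff_eq_one_of_le (half_pos hε) h, one_mul]

lemma fEps_nonneg (ε : ℝ) (x : R) : 0 ≤ fEps ε x := cfcₙ_nonneg fun _ _ ↦ cutoff_nonneg _ _

lemma star_fEps (ε : ℝ) (x : R) : star (fEps ε x) = fEps ε x :=
  (IsSelfAdjoint.of_nonneg (fEps_nonneg ε x)).star_eq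

lemma norm_fEps_le_one {B : Type*} [NonUnitalCStarAlgebra B] (ε : ℝ) (x : B) : ‖fEps ε x‖ ≤ 1 :=
  norm_cfcₙ_le fun t _ ↦ by
    rw [Real.norm_of_nonneg (cutoff_nonneg _ _)]; exact cutoff_le_one _ _

lemma fEps_half_mul_fEps {ε : ℝ} (hε : 0 < ε) {x : R} (hx : 0 ≤ x) :
    fEps (ε / 2) x * fEps ε x = fEps ε x :=
  cfcₙ_mul_cfcₙ_eq_right hx (continuous_cutoff _) (cutoff_zero _) (continuous_cutoff _)
    (cutoff_zero _) fun t _ _ ↦ cutoff_half_mul_cutoff hε t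

lemma norm_fEps_mul_sub_le {x : R} (hx : 0 ≤ x) {ε : ℝ} (hε : 0 < ε) :
    ‖fEps ε x * x - x‖ ≤ ε := by
  have : fEps ε x * x = cfcₙ (fun t ↦ cutoff ε t * t) x := by
    rw [cfcₙ_mul (cutoff ε) (fun t ↦ t) x (continuous_cutoff _).continuousOn (cutoff_zero _),
      cfcₙ_id' ℝ x, fEps]
  rw [this]
  refine norm_cfcₙ_sub_le hx ((continuous_cutoff _).mul continuous_id) (by simp) fun t ht ↦ ?_
  rcases le_total ε t with h | h
  · simpa [cutoff_eq_one_of_le hε h] using hε.le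
  · rw [abs_le]
    constructor <;> nlinarith [cutoff_nonneg ε t, cutoff_le_one ε t]

lemma tendsto_fEps_mul {x : R} (hx : 0 ≤ x) :
    Tendsto (fun n : ℕ ↦ fEps (1 / (n + 1)) x * x) atTop (𝓝 x) :=
  tendsto_iff_norm_sub_tendsto_zero.mpr <| squeeze_zero (fun _ ↦ norm_nonneg _)
    (fun _ ↦ norm_fEps_mul_sub_le hx (by positivity)) tendsto_one_div_add_atTop_nhds_zero_nat

lemma tendsto_mul_fEps {x : R} (hx : 0 ≤ x) :
    Tendsto (fun n : ℕ ↦ x * fEps (1 / (n + 1)) x) atTop (𝓝 x) := by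
  simpa only [star_mul, (IsSelfAdjoint.of_nonneg hx).star_eq, star_fEps]
    using (tendsto_fEps_mul hx).star

/-- The cut-down `(x - ε)₊` of a positive element `x`, for `0 ≤ ε`. -/
def cutDown {B : Type*} [NonUnitalCStarAlgebra B] (ε : ℝ) (x : B) : B :=
  cfcₙ (fun t ↦ max (t - ε) 0) x

lemma cutDown_nonneg (ε : ℝ) (x : R) : 0 ≤ cutDown ε x := cfcₙ_nonneg fun _ _ ↦ le_max_right _ _

lemma cutDown_anti {x : R} {ε δ : ℝ} (hδ : 0 ≤ δ) (h : δ ≤ ε) : cutDown ε x ≤ cutDown δ x :=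
  cfcₙ_mono (fun t _ ↦ max_le_max (by linarith) le_rfl) (by fun_prop) (by fun_prop)
    (by simpa using hδ.trans h) (by simpa using hδ)

lemma cutDown_smul {B : Type*} [NonUnitalCStarAlgebra B] {r ε : ℝ} (hr : 0 < r) (hε : 0 ≤ ε)
    {x : B} (hx : IsSelfAdjoint x) : cutDown ε (r • x) = r • cutDown (ε / r) x := by
  unfold cutDown
  rw [← cfcₙ_smul r _ x (by fun_prop) (by simpa using by positivity),
    ← cfcₙ_comp_smul r (fun t ↦ max (t - ε) 0) x (by fun_prop) (by simpa using hε)]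
  congr 1
  ext t
  simp only [smul_eq_mul]
  rw [mul_max_of_nonneg _ _ hr.le, mul_sub, mul_zero, mul_div_cancel₀ _ hr.ne']

lemma norm_cutDown_sub_le {x : R} (hx : 0 ≤ x) {ε : ℝ} (hε : 0 ≤ ε) : ‖cutDown ε x - x‖ ≤ ε := by
  refine norm_cfcₙ_sub_le hx (by fun_prop) (by simpa using hε) fun t ht ↦ ?_
  rcases le_total (t - ε) 0 with h | h <;> simp only [h, max_eq_left, max_eq_right] <;>
    rw [abs_le] <;> constructor <;> linarith

lemma tendsto_cutDown {x : R} (hx : 0 ≤ x) :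
    Tendsto (fun n : ℕ ↦ cutDown (1 / (n + 1)) x) atTop (𝓝 x) :=
  tendsto_iff_norm_sub_tendsto_zero.mpr <| squeeze_zero (fun _ ↦ norm_nonneg _)
    (fun _ ↦ norm_cutDown_sub_le hx (by positivity)) tendsto_one_div_add_atTop_nhds_zero_nat

lemma cutDown_add_le_of_commute {x y : R} (hx : 0 ≤ x) (hy : 0 ≤ y) (hxy : Commute x y)
    {ε δ : ℝ} (hε : 0 ≤ ε) (hδ : 0 ≤ δ) :
    cutDown (ε + δ) (x + y) ≤ cutDown ε x + cutDown δ y := by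
  refine cfcₙ_add_le_add_of_commute hx hy hxy (by fun_prop) (by simpa) (by fun_prop) (by simpa)
    (by fun_prop) (max_eq_right (by linarith)) fun s t _ _ ↦ max_le ?_ (by positivity)
  linarith [le_max_left (s - ε) 0, le_max_left (t - δ) 0]

lemma cutDown_add_cutDown_le_of_commute {x y : R} (hx : 0 ≤ x) (hy : 0 ≤ y) (hxy : Commute x y)
    {ε : ℝ} (hε : 0 ≤ ε) : cutDown ε x + cutDown ε y ≤ cutDown ε (x + y) := by
  refine add_cfcₙ_le_cfcₙ_add_of_commute hx hy hxy (by fun_prop) (by simpa) (by fun_prop)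
    (by simpa) (by fun_prop) (by simpa) fun s t hs ht ↦ ?_
  rcases max_cases (s - ε) 0 with h | h <;> rcases max_cases (t - ε) 0 with h' | h' <;>
    rcases max_cases (s + t - ε) 0 with h'' | h'' <;> linarith

/-! ### Quasitracial functionals -/

/-- The algebraic part of the definition of a quasitrace: no lower semicontinuity, no density of
the domain, and no extension to matrices. -/
structure IsQuasitracial (φ : R → ℝ≥0∞) : Prop where
  map_zero : φ 0 = 0
  map_smul : ∀ (r : ℝ) (a : R), 0 < r → 0 ≤ a → φ (r • a) = ENNReal.ofReal r * φ a
  map_add : ∀ a b : R, 0 ≤ a → 0 ≤ b → a * b = b * a → φ (a + b) = φ a + φ b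
  map_star_mul_self : ∀ x : R, φ (star x * x) = φ (x * star x)

omit [StarOrderedRing R] in
lemma QuasiTrace.isQuasitracial (τ : QuasiTrace R) : IsQuasitracial τ.toFun :=
  ⟨τ.map_zero, τ.map_smul, τ.map_add_of_commute, τ.map_star_mul_self⟩

namespace IsQuasitracial

variable {φ : R → ℝ≥0∞} (h : IsQuasitracial φ)
include h

lemma mono_of_commute {u v : R} (hu : 0 ≤ u) (huv : u ≤ v) (hc : Commute u v) : φ u ≤ φ v := by
  have := h.map_add u (v - u) hu (sub_nonneg.mpr huv) (by rw [mul_sub, sub_mul, hc.eq])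
  rw [add_sub_cancel] at this
  exact this ▸ le_self_add

lemma map_cfcₙ_le {x : R} (hx : 0 ≤ x) {f g : ℝ → ℝ} (hf : Continuous f) (hf0 : f 0 = 0)
    (hg : Continuous g) (hg0 : g 0 = 0) (hfn : ∀ t, 0 ≤ t → t ≤ ‖x‖ → 0 ≤ f t)
    (hle : ∀ t, 0 ≤ t → t ≤ ‖x‖ → f t ≤ g t) : φ (cfcₙ f x) ≤ φ (cfcₙ g x) :=
  h.mono_of_commute
    (cfcₙ_nonneg fun t ht ↦ (mem_Icc_of_mem_quasispectrum hx ht).elim (hfn t))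
    (cfcₙ_mono (fun t ht ↦ (mem_Icc_of_mem_quasispectrum hx ht).elim (hle t)) hf.continuousOn
      hg.continuousOn) (cfcₙ_commute_cfcₙ f g x)

lemma map_cfcₙ_add {x : R} (hx : 0 ≤ x) {f g : ℝ → ℝ} (hf : Continuous f) (hf0 : f 0 = 0)
    (hg : Continuous g) (hg0 : g 0 = 0) (hfn : ∀ t, 0 ≤ t → 0 ≤ f t)
    (hgn : ∀ t, 0 ≤ t → 0 ≤ g t) :
    φ (cfcₙ (fun t ↦ f t + g t) x) = φ (cfcₙ f x) + φ (cfcₙ g x) := by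
  rw [cfcₙ_add f g x hf.continuousOn hf0 hg.continuousOn hg0]
  exact h.map_add _ _ (cfcₙ_nonneg fun t ht ↦ hfn t (mem_Icc_of_mem_quasispectrum hx ht).1)
    (cfcₙ_nonneg fun t ht ↦ hgn t (mem_Icc_of_mem_quasispectrum hx ht).1)
    (cfcₙ_commute_cfcₙ f g x)

omit [StarOrderedRing R] in
lemma map_cfcₙ_star_mul_self (y : R) {f : ℝ → ℝ} (hf : Continuous f) {ε : ℝ} (hε : 0 < ε)
    (hfε : ∀ t ≤ ε, f t = 0) (hf0 : ∀ t, 0 ≤ f t) :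
    φ (cfcₙ f (star y * y)) = φ (cfcₙ f (y * star y)) := by
  obtain ⟨w, hw, hw'⟩ := exists_star_mul_self_eq_cfcₙ y hf hε hfε hf0
  rw [← hw, ← hw', h.map_star_mul_self]

lemma le_of_mul_eq {e x : R} (he : 0 ≤ e) (he1 : ‖e‖ ≤ 1) (hx : 0 ≤ x) (hex : e * x = x) {C : ℝ}
    (hC : 0 < C) (hxC : ‖x‖ ≤ C) : φ x ≤ ENNReal.ofReal C * φ e := by
  have hes : star e = e := (IsSelfAdjoint.of_nonneg he).star_eq
  have hxe : x * e = x := by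
    simpa [hes, (IsSelfAdjoint.of_nonneg hx).star_eq] using congrArg star hex
  rw [← h.map_smul C e hC he]
  refine h.mono_of_commute hx ?_ ((Commute.smul_right (hxe.trans hex.symm)) C)
  have hee : 0 ≤ star e * e := star_mul_self_nonneg e
  calc x = star e * x * e := by rw [hes, hex, hxe]
    _ ≤ ‖x‖ • (star e * e) := CStarAlgebra.star_left_conjugate_le_norm_smul
    _ ≤ C • (star e * e) := smul_le_smul_of_nonneg_right hxC hee
    _ ≤ C • e := by
      rw [hes]
      exact smul_le_smul_of_nonneg_left (mul_self_le_self_of_nonneg he he1) hC.le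

lemma map_fEps_anti {x : R} (hx : 0 ≤ x) {ε δ : ℝ} (hδ : 0 < δ) (hδε : δ ≤ ε) :
    φ (fEps ε x) ≤ φ (fEps δ x) :=
  h.map_cfcₙ_le hx (continuous_cutoff _) (cutoff_zero _) (continuous_cutoff _) (cutoff_zero _)
    (fun _ _ _ ↦ cutoff_nonneg _ _) fun _ ht _ ↦ cutoff_anti hδ hδε ht

lemma map_cutDown_anti {x : R} {ε δ : ℝ} (hδ : 0 ≤ δ) (hδε : δ ≤ ε) :
    φ (cutDown ε x) ≤ φ (cutDown δ x) :=
  h.mono_of_commute (cutDown_nonneg _ _) (cutDown_anti hδ hδε) (cfcₙ_commute_cfcₙ _ _ _)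

lemma map_cutDown_le {x : R} (hx : 0 ≤ x) {ε : ℝ} (hε : 0 ≤ ε) : φ (cutDown ε x) ≤ φ x := by
  have hx0 : cutDown 0 x = x :=
    sub_eq_zero.mp (norm_le_zero_iff.mp (norm_cutDown_sub_le hx le_rfl))
  exact (h.map_cutDown_anti le_rfl hε).trans_eq (by rw [hx0])

end IsQuasitracial

/-- The lower semicontinuous regularization `x ↦ sup_{ε > 0} φ((x - ε)₊)`. -/
def lscRegularization {B : Type*} [NonUnitalCStarAlgebra B] (φ : B → ℝ≥0∞) (x : B) : ℝ≥0∞ :=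
  ⨆ (ε : ℝ) (_ : 0 < ε), φ (cutDown ε x)

lemma le_lscRegularization {B : Type*} [NonUnitalCStarAlgebra B] {φ : B → ℝ≥0∞} {x : B} {ε : ℝ}
    (hε : 0 < ε) : φ (cutDown ε x) ≤ lscRegularization φ x :=
  le_iSup₂_of_le ε hε le_rfl

section lscRegularization

variable {φ : R → ℝ≥0∞} (h : IsQuasitracial φ)
include h

lemma lscRegularization_smul {r : ℝ} (hr : 0 < r) {x : R} (hx : 0 ≤ x) :
    lscRegularization φ (r • x) = ENNReal.ofReal r * lscRegularization φ x := by
  simp only [lscRegularization, ENNReal.mul_iSup]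
  refine le_antisymm (iSup₂_le fun ε hε ↦ le_iSup₂_of_le (ε / r) (by positivity) ?_)
    (iSup₂_le fun ε hε ↦ le_iSup₂_of_le (r * ε) (by positivity) ?_)
  · rw [cutDown_smul hr hε.le (.of_nonneg hx), h.map_smul r _ hr (cutDown_nonneg _ _)]
  · rw [cutDown_smul hr (by positivity) (.of_nonneg hx), h.map_smul r _ hr (cutDown_nonneg _ _),
      mul_div_cancel_left₀ _ hr.ne']

lemma lscRegularization_add {x y : R} (hx : 0 ≤ x) (hy : 0 ≤ y) (hxy : Commute x y) :
    lscRegularization φ (x + y) = lscRegularization φ x + lscRegularization φ y := by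
  have hadd (ε : ℝ) :
      φ (cutDown ε x + cutDown ε y) = φ (cutDown ε x) + φ (cutDown ε y) :=
    h.map_add _ _ (cutDown_nonneg _ _) (cutDown_nonneg _ _) (commute_cfcₙ_cfcₙ hxy _ _)
  have hcomm (ε δ : ℝ) : Commute (cutDown δ (x + y)) (cutDown ε x + cutDown ε y) :=
    (commute_cfcₙ_cfcₙ ((Commute.refl x).add_left hxy.symm) _ _).add_right
      (commute_cfcₙ_cfcₙ (hxy.add_left (Commute.refl y)) _ _)
  apply le_antisymm
  · refine iSup₂_le fun ε hε ↦ ?_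
    have hε2 : 0 < ε / 2 := half_pos hε
    calc φ (cutDown ε (x + y)) ≤ φ (cutDown (ε / 2) x + cutDown (ε / 2) y) := by
          refine h.mono_of_commute (cutDown_nonneg _ _) ?_ (hcomm _ _)
          simpa using cutDown_add_le_of_commute hx hy hxy hε2.le hε2.le
      _ ≤ lscRegularization φ x + lscRegularization φ y := by
          rw [hadd]
          exact add_le_add (le_lscRegularization hε2) (le_lscRegularization hε2)
  · have : Nonempty {ε : ℝ // 0 < ε} := ⟨⟨1, one_pos⟩⟩
    simp only [lscRegularization, iSup_subtype']
    refine ENNReal.iSup_add_iSup_le fun ⟨ε, hε⟩ ⟨δ, hδ⟩ ↦ ?_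
    have hm : 0 < min ε δ := lt_min hε hδ
    refine le_iSup_of_le ⟨_, hm⟩ ?_
    calc φ (cutDown ε x) + φ (cutDown δ y)
        ≤ φ (cutDown (min ε δ) x) + φ (cutDown (min ε δ) y) :=
          add_le_add (h.map_cutDown_anti hm.le (min_le_left _ _))
            (h.map_cutDown_anti hm.le (min_le_right _ _))
      _ ≤ φ (cutDown (min ε δ) (x + y)) := by
          rw [← hadd]
          exact h.mono_of_commute (add_nonneg (cutDown_nonneg _ _) (cutDown_nonneg _ _))
            (cutDown_add_cutDown_le_of_commute hx hy hxy hm.le) (hcomm _ _).symm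

lemma IsQuasitracial.lscRegularization : IsQuasitracial (lscRegularization φ) where
  map_zero := by simp [Paper.lscRegularization, cutDown, h.map_zero]
  map_smul _ _ hr ha := lscRegularization_smul h hr ha
  map_add _ _ hx hy hxy := lscRegularization_add h hx hy hxy
  map_star_mul_self x := iSup_congr fun ε ↦ iSup_congr fun hε ↦
    h.map_cfcₙ_star_mul_self x (by fun_prop) hε (fun t ht ↦ max_eq_right (by linarith))
      fun t ↦ le_max_right _ _

end lscRegularization

/-! ### Dimension functions -/

omit [StarOrderedRing R] in
lemma QuasiTrace.le_of_tendsto (τ : QuasiTrace R) {u : ℕ → R} {x : R} (hu : ∀ n, 0 ≤ u n)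
    (hx : 0 ≤ x) (h : Tendsto u atTop (𝓝 x)) {C : ℝ≥0∞} (hC : ∀ n, τ.toFun (u n) ≤ C) :
    τ.toFun x ≤ C := by
  by_contra! hlt
  have hmem : Tendsto u atTop (𝓝[{a : R | 0 ≤ a}] x) :=
    tendsto_nhdsWithin_iff.mpr ⟨h, .of_forall hu⟩
  obtain ⟨n, hn⟩ := (hmem.eventually (τ.lowerSemicontinuousOn x hx C hlt)).exists
  exact (hC n).not_gt hn

lemma QuasiTrace.le_of_forall_cutDown_le (τ : QuasiTrace R) {x : R} (hx : 0 ≤ x) {C : ℝ≥0∞}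
    (hC : ∀ ε : ℝ, 0 < ε → τ.toFun (cutDown ε x) ≤ C) : τ.toFun x ≤ C :=
  τ.le_of_tendsto (fun _ ↦ cutDown_nonneg _ _) hx (tendsto_cutDown hx) fun _ ↦ hC _ (by positivity)

lemma apply_fEps_le_dTau (τ : QuasiTrace R) {x : R} (hx : 0 ≤ x) {ε : ℝ} (hε : 0 < ε) :
    τ.toFun (fEps ε x) ≤ dTau τ x := by
  obtain ⟨n, hn⟩ := exists_nat_one_div_lt hε
  exact le_iSup_of_le n (τ.isQuasitracial.map_fEps_anti hx (by positivity) hn.le)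

lemma exists_cutDown_le_mul_cutoff {f : ℝ → ℝ} (hf : Continuous f) (hf0 : f 0 = 0) {C M ε : ℝ}
    (hC : 0 < C) (hfC : ∀ t, 0 ≤ t → t ≤ M → f t ≤ C) (hε : 0 < ε) :
    ∃ δ, 0 < δ ∧ ∀ t, 0 ≤ t → t ≤ M → max (f t - ε) 0 ≤ C * cutoff δ t := by
  obtain ⟨δ, hδ, hfδ⟩ := Metric.continuousAt_iff.mp (hf.continuousAt (x := (0 : ℝ))) ε hε
  refine ⟨δ / 2, half_pos hδ, fun t ht htM ↦ max_le ?_ (mul_nonneg hC.le (cutoff_nonneg _ _))⟩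
  rcases lt_or_ge t (δ / 2) with h | h
  · have : |f t| < ε := by
      simpa [hf0] using hfδ (x := t) (by rw [Real.dist_eq, sub_zero, abs_of_nonneg ht]; linarith)
    have hC0 := mul_nonneg hC.le (cutoff_nonneg (δ / 2) t)
    linarith [le_abs_self (f t)]
  · rw [cutoff_eq_one_of_le (half_pos hδ) h]
    linarith [hfC t ht htM]

lemma apply_cfcₙ_le_mul_dTau (τ : QuasiTrace R) {x : R} (hx : 0 ≤ x) {f : ℝ → ℝ}
    (hf : Continuous f) (hf0 : f 0 = 0) {C : ℝ} (hC : 0 < C)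
    (hfn : ∀ t, 0 ≤ t → t ≤ ‖x‖ → 0 ≤ f t) (hfC : ∀ t, 0 ≤ t → t ≤ ‖x‖ → f t ≤ C) :
    τ.toFun (cfcₙ f x) ≤ ENNReal.ofReal C * dTau τ x := by
  have hnn : 0 ≤ cfcₙ f x :=
    cfcₙ_nonneg fun t ht ↦ (mem_Icc_of_mem_quasispectrum hx ht).elim (hfn t)
  refine τ.le_of_forall_cutDown_le hnn fun ε hε ↦ ?_
  obtain ⟨δ, hδ, hle⟩ := exists_cutDown_le_mul_cutoff hf hf0 hC hfC hε
  calc τ.toFun (cutDown ε (cfcₙ f x)) = τ.toFun (cfcₙ (fun t ↦ max (f t - ε) 0) x) := by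
        rw [cutDown, cfcₙ_comp' (fun t ↦ max (t - ε) 0) f x (by fun_prop) (by simpa using hε.le)
          hf.continuousOn hf0]
    _ ≤ τ.toFun (cfcₙ (fun t ↦ C * cutoff δ t) x) :=
        τ.isQuasitracial.map_cfcₙ_le hx (by fun_prop) (by simpa [hf0] using hε.le)
          (continuous_const.mul (continuous_cutoff _)) (by simp [cutoff_zero])
          (fun _ _ _ ↦ le_max_right _ _) hle
    _ = ENNReal.ofReal C * τ.toFun (fEps δ x) := by
        rw [← τ.map_smul C _ hC (fEps_nonneg _ _), fEps,
          ← cfcₙ_smul C (cutoff δ) x (continuous_cutoff _).continuousOn (cutoff_zero _)]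
        rfl
    _ ≤ ENNReal.ofReal C * dTau τ x := by gcongr; exact apply_fEps_le_dTau τ hx hδ

omit [StarOrderedRing R] in
lemma dTau_star_mul_self (τ : QuasiTrace R) (y : R) :
    dTau τ (star y * y) = dTau τ (y * star y) :=
  iSup_congr fun n ↦
    have hn : (0 : ℝ) < 1 / (n + 1) := by positivity
    τ.isQuasitracial.map_cfcₙ_star_mul_self y (continuous_cutoff _) (half_pos hn)
      (fun _ ↦ cutoff_eq_zero_of_le hn) (cutoff_nonneg _)

lemma apply_fEps_one_div_mono (τ : QuasiTrace R) {b : R} (hb : 0 ≤ b) :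
    Monotone fun n : ℕ ↦ τ.toFun (fEps (1 / (n + 1)) b) := fun k l hkl ↦
  τ.isQuasitracial.map_fEps_anti hb (by positivity)
    (one_div_le_one_div_of_le (by positivity) (by gcongr))

lemma dTau_add_of_mul_eq_zero (τ : QuasiTrace R) {x y : R} (hx : 0 ≤ x) (hy : 0 ≤ y)
    (hxy : x * y = 0) : dTau τ (x + y) = dTau τ x + dTau τ y := by
  have hcomm : Commute x y := hxy.trans (mul_eq_zero_comm_of_nonneg hx hy hxy).symm
  unfold dTau
  rw [ENNReal.iSup_add_iSup_of_monotone (apply_fEps_one_div_mono τ hx)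
    (apply_fEps_one_div_mono τ hy)]
  refine iSup_congr fun n ↦ ?_
  rw [fEps, cfcₙ_add_of_mul_eq_zero hx hy hxy (continuous_cutoff _) (cutoff_zero _)]
  exact τ.map_add_of_commute _ _ (fEps_nonneg _ _) (fEps_nonneg _ _)
    (commute_cfcₙ_cfcₙ hcomm _ _)

lemma norm_mul_mul_le_of_norm_le_one {B : Type*} [NonUnitalCStarAlgebra B] {e : B} (he : ‖e‖ ≤ 1)
    (c : B) : ‖e * c * e‖ ≤ ‖c‖ :=
  calc ‖e * c * e‖ ≤ ‖e‖ * ‖c‖ * ‖e‖ := norm_mul₃_le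
    _ ≤ 1 * ‖c‖ * 1 := by gcongr
    _ = ‖c‖ := by ring

lemma apply_fEps_conj_le_dTau (τ : QuasiTrace R) {b c : R} (hb : 0 ≤ b) (hc : 0 ≤ c) {ε δ : ℝ}
    (hε : 0 < ε) (hδ : 0 < δ) :
    τ.toFun (fEps δ (fEps ε b * c * fEps ε b)) ≤ dTau τ b := by
  have hc' : 0 ≤ fEps ε b * c * fEps ε b := by
    simpa only [star_fEps] using star_left_conjugate_nonneg hc (fEps ε b)
  have hunit : fEps (ε / 2) b * (fEps ε b * c * fEps ε b) = fEps ε b * c * fEps ε b := by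
    simp only [← mul_assoc, fEps_half_mul_fEps hε hb]
  have hle := τ.isQuasitracial.le_of_mul_eq (fEps_nonneg _ _) (norm_fEps_le_one _ _)
    (fEps_nonneg δ _) (mul_cfcₙ_eq_of_mul_eq (.of_nonneg hc') hunit (continuous_cutoff _)
      (half_pos hδ) fun _ ↦ cutoff_eq_zero_of_le hδ) one_pos (norm_fEps_le_one _ _)
  rw [ENNReal.ofReal_one, one_mul] at hle
  exact hle.trans (apply_fEps_le_dTau τ hb (half_pos hε))

lemma dTau_le_of_tendsto_conj (τ : QuasiTrace R) {b c : R} (hb : 0 ≤ b) (hc : 0 ≤ c)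
    (h : Tendsto (fun n : ℕ ↦ fEps (1 / (n + 1)) b * c * fEps (1 / (n + 1)) b) atTop (𝓝 c)) :
    dTau τ c ≤ dTau τ b := by
  refine iSup_le fun n ↦ ?_
  have hnn (m : ℕ) : 0 ≤ fEps (1 / (m + 1)) b * c * fEps (1 / (m + 1)) b := by
    simpa only [star_fEps] using star_left_conjugate_nonneg hc (fEps (1 / (m + 1)) b)
  have hlim := Filter.Tendsto.cfcₙ (isCompact_Icc (a := (0 : ℝ)) (b := ‖c‖))
    (cutoff (1 / (n + 1))) h
    (.of_forall fun m t ht ↦ (mem_Icc_of_mem_quasispectrum (hnn m) ht).imp_right fun h ↦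
      h.trans (norm_mul_mul_le_of_norm_le_one (norm_fEps_le_one _ _) c))
    (.of_forall fun m ↦ .of_nonneg (hnn m)) (fun t ↦ mem_Icc_of_mem_quasispectrum hc)
    (.of_nonneg hc) (continuous_cutoff _).continuousOn (cutoff_zero _)
  exact τ.le_of_tendsto (fun m ↦ fEps_nonneg _ _) (fEps_nonneg _ _) hlim fun m ↦
    apply_fEps_conj_le_dTau τ hb hc (by positivity) (by positivity)

lemma tendsto_conj_fEps_of_mem_her {b c : R} (hb : 0 ≤ b) (hc : c ∈ her b) :
    Tendsto (fun n : ℕ ↦ fEps (1 / (n + 1)) b * c * fEps (1 / (n + 1)) b) atTop (𝓝 c) := by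
  rw [Metric.tendsto_atTop]
  intro ε hε
  obtain ⟨d, ⟨y, rfl⟩, hd⟩ := Metric.mem_closure_iff.mp hc (ε / 3) (by positivity)
  have hlim := (((tendsto_fEps_mul hb).mul_const y).mul (tendsto_mul_fEps hb))
  obtain ⟨N, hN⟩ := Metric.tendsto_atTop.mp hlim (ε / 3) (by positivity)
  refine ⟨N, fun n hn ↦ ?_⟩
  set e := fEps (1 / (n + 1)) b
  have hcontr : dist (e * c * e) (e * b * y * (b * e)) ≤ dist c (b * y * b) := by
    have : e * b * y * (b * e) = e * (b * y * b) * e := by simp only [mul_assoc]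
    rw [this, dist_eq_norm, dist_eq_norm, ← sub_mul, ← mul_sub]
    exact norm_mul_mul_le_of_norm_le_one (norm_fEps_le_one _ _) _
  calc dist (e * c * e) c ≤ dist (e * c * e) (e * b * y * (b * e)) +
      dist (e * b * y * (b * e)) (b * y * b) + dist (b * y * b) c := dist_triangle4 _ _ _ _
    _ < ε := by rw [dist_comm (b * y * b) c]; linarith [hN n hn]

lemma dTau_le_of_mem_her (τ : QuasiTrace R) {b c : R} (hb : 0 ≤ b) (hc : 0 ≤ c)
    (h : c ∈ her b) : dTau τ c ≤ dTau τ b :=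
  dTau_le_of_tendsto_conj τ hb hc (tendsto_conj_fEps_of_mem_her hb h)

lemma norm_sub_mul_sq_le {s b e : R} (he : IsSelfAdjoint e) {C : ℝ} (hC : 0 ≤ C)
    (h : star s * s ≤ C • b) : ‖s - s * e‖ ^ 2 ≤ C * ((1 + ‖e‖) * ‖b - b * e‖) := by
  obtain ⟨t, ht⟩ := CStarAlgebra.nonneg_iff_eq_star_mul_self.mp (sub_nonneg.mpr h)
  have hconj (u : R) : star (u - u * e) * (u - u * e) =
      (star u * u - star u * u * e) - e * (star u * u - star u * u * e) := by
    simp only [star_sub, star_mul, he.star_eq, sub_mul, mul_sub, mul_assoc]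
    abel
  have hle : star (s - s * e) * (s - s * e) ≤ C • ((b - b * e) - e * (b - b * e)) :=
    calc star (s - s * e) * (s - s * e)
        ≤ star (s - s * e) * (s - s * e) + star (t - t * e) * (t - t * e) :=
          le_add_of_nonneg_right (star_mul_self_nonneg _)
      _ = C • ((b - b * e) - e * (b - b * e)) := by
          rw [hconj, hconj, ← ht]
          simp only [sub_mul, mul_sub, smul_sub, smul_mul_assoc, mul_smul_comm]
          abel
  calc ‖s - s * e‖ ^ 2 = ‖star (s - s * e) * (s - s * e)‖ := by
        rw [CStarRing.norm_star_mul_self, sq]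
    _ ≤ ‖C • ((b - b * e) - e * (b - b * e))‖ :=
        CStarAlgebra.norm_le_norm_of_nonneg_of_le (star_mul_self_nonneg _) hle
    _ ≤ C * (‖b - b * e‖ + ‖e‖ * ‖b - b * e‖) := by
        rw [norm_smul, Real.norm_of_nonneg hC]
        gcongr
        exact (norm_sub_le _ _).trans (by gcongr; exact norm_mul_le _ _)
    _ = C * ((1 + ‖e‖) * ‖b - b * e‖) := by ring

lemma tendsto_conj_fEps_of_le_smul {b c : R} (hb : 0 ≤ b) (hc : 0 ≤ c) {C : ℝ} (hC : 0 ≤ C)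
    (hcb : c ≤ C • b) :
    Tendsto (fun n : ℕ ↦ fEps (1 / (n + 1)) b * c * fEps (1 / (n + 1)) b) atTop (𝓝 c) := by
  obtain ⟨s, rfl⟩ := CStarAlgebra.nonneg_iff_eq_star_mul_self.mp hc
  have hb0 : Tendsto (fun n : ℕ ↦ C * (2 * ‖b - b * fEps (1 / (n + 1)) b‖)) atTop (𝓝 0) := by
    have hb' : Tendsto (fun n : ℕ ↦ b - b * fEps (1 / (n + 1)) b) atTop (𝓝 0) := by
      simpa only [sub_self] using (tendsto_mul_fEps hb).const_sub b
    simpa only [norm_zero, mul_zero] using (hb'.norm.const_mul 2).const_mul C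
  have hsq : Tendsto (fun n : ℕ ↦ ‖s - s * fEps (1 / (n + 1)) b‖ ^ 2) atTop (𝓝 0) := by
    refine squeeze_zero (fun _ ↦ by positivity) (fun n ↦ ?_) hb0
    refine (norm_sub_mul_sq_le (.of_nonneg (fEps_nonneg _ _)) hC hcb).trans ?_
    gcongr
    linarith [norm_fEps_le_one (1 / ((n : ℝ) + 1)) b]
  have hs : Tendsto (fun n : ℕ ↦ s * fEps (1 / (n + 1)) b) atTop (𝓝 s) := by
    rw [tendsto_iff_norm_sub_tendsto_zero]
    simpa only [Real.sqrt_sq (norm_nonneg _), Real.sqrt_zero, norm_sub_rev s] using hsq.sqrt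
  refine (hs.star.mul hs).congr fun n ↦ ?_
  simp only [star_mul, star_fEps, mul_assoc]

lemma dTau_le_of_le_smul (τ : QuasiTrace R) {b c : R} (hb : 0 ≤ b) (hc : 0 ≤ c) {C : ℝ}
    (hC : 0 ≤ C) (h : c ≤ C • b) : dTau τ c ≤ dTau τ b :=
  dTau_le_of_tendsto_conj τ hb hc (tendsto_conj_fEps_of_le_smul hb hc hC h)

lemma dTau_star_mul_mul_le (τ : QuasiTrace R) {p : R} (hp : 0 ≤ p) (g : R) :
    dTau τ (star g * p * g) ≤ dTau τ p := by
  obtain ⟨s, rfl⟩ := CStarAlgebra.nonneg_iff_eq_star_mul_self.mp hp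
  have hsg : star g * (star s * s) * g = star (s * g) * (s * g) := by
    simp only [star_mul, mul_assoc]
  have hgs : s * g * star (s * g) = s * (g * star g) * star s := by
    simp only [star_mul, mul_assoc]
  rw [hsg, dTau_star_mul_self, dTau_star_mul_self τ s]
  refine dTau_le_of_le_smul τ (mul_star_self_nonneg _) (mul_star_self_nonneg _)
    (norm_nonneg (g * star g)) ?_
  rw [hgs]
  exact CStarAlgebra.star_right_conjugate_le_norm_smul (hb := .mul_star_self g)

/-! ### Comparing quasitraces of norm-close elements -/

lemma dTau_le_dTau_cfcₙ (τ : QuasiTrace R) {x : R} (hx : 0 ≤ x) {f : ℝ → ℝ} (hf : Continuous f)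
    (hf0 : f 0 = 0) (hmono : StrictMonoOn f (Set.Ici 0)) : dTau τ x ≤ dTau τ (cfcₙ f x) := by
  have hpos {t : ℝ} (ht : 0 < t) : 0 < f t := hf0 ▸ hmono (Set.mem_Ici.mpr le_rfl) ht.le ht
  have hnn : 0 ≤ cfcₙ f x := cfcₙ_nonneg fun t ht ↦ by
    simpa only [hf0] using hmono.monotoneOn (Set.mem_Ici.mpr le_rfl)
      (mem_Icc_of_mem_quasispectrum hx ht).1 (mem_Icc_of_mem_quasispectrum hx ht).1
  refine iSup_le fun n ↦ ?_
  have hε : (0 : ℝ) < 1 / (n + 1) := by positivity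
  set ε : ℝ := 1 / (n + 1)
  have hfε := hpos (half_pos hε)
  refine le_trans ?_ (apply_fEps_le_dTau τ hnn hfε)
  rw [fEps, fEps, ← cfcₙ_comp' (cutoff (f (ε / 2))) f x (continuous_cutoff _).continuousOn
    (cutoff_zero _) hf.continuousOn hf0]
  refine τ.isQuasitracial.map_cfcₙ_le hx (continuous_cutoff _) (cutoff_zero _)
    ((continuous_cutoff _).comp hf) (by simp [cutoff_zero, hf0])
    (fun _ _ _ ↦ cutoff_nonneg _ _) fun t ht _ ↦ ?_
  rcases le_total t (ε / 2) with h | h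
  · rw [cutoff_eq_zero_of_le hε h]
    exact cutoff_nonneg _ _
  · rw [cutoff_eq_one_of_le hfε (hmono.monotoneOn (half_pos hε).le ht h)]
    exact cutoff_le_one _ _

lemma dTau_le_dTau_mul_self (τ : QuasiTrace R) {x : R} (hx : 0 ≤ x) :
    dTau τ x ≤ dTau τ (x * x) := by
  have hsq : x * x = cfcₙ (fun t : ℝ ↦ t * t) x := by
    rw [cfcₙ_mul (fun t ↦ t) (fun t ↦ t) x, cfcₙ_id' ℝ x]
  rw [hsq]
  exact dTau_le_dTau_cfcₙ τ hx (by fun_prop) (by simp) fun s hs t _ hst ↦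
    mul_self_lt_mul_self hs hst

lemma dTau_le_dTau_mul_mul_self (τ : QuasiTrace R) {x : R} (hx : 0 ≤ x) :
    dTau τ x ≤ dTau τ (x * x * x) := by
  have hcube : x * x * x = cfcₙ (fun t : ℝ ↦ t * t * t) x := by
    rw [cfcₙ_mul (fun t ↦ t * t) (fun t ↦ t) x, cfcₙ_mul (fun t ↦ t) (fun t ↦ t) x, cfcₙ_id' ℝ x]
  rw [hcube]
  exact dTau_le_dTau_cfcₙ τ hx (by fun_prop) (by simp) fun s hs t _ hst ↦
    mul_lt_mul'' (mul_self_lt_mul_self hs hst) hst (mul_self_nonneg s) hs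

lemma cutDown_mul_mul_cutDown {x : R} (hx : 0 ≤ x) {ε : ℝ} (hε : 0 ≤ ε) :
    cutDown ε x * x * cutDown ε x =
      cutDown ε x * cutDown ε x * cutDown ε x + ε • (cutDown ε x * cutDown ε x) := by
  let m : ℝ → ℝ := fun t ↦ max (t - ε) 0
  have hm : Continuous m := by fun_prop
  have _hm0 : m 0 = 0 := max_eq_right (by linarith)
  have hleft : cutDown ε x * x = cutDown ε x * cutDown ε x + ε • cutDown ε x :=
    calc cutDown ε x * x = cfcₙ (fun t ↦ m t * t) x := by
          rw [cfcₙ_mul m (fun t ↦ t) x, cfcₙ_id' ℝ x]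
          rfl
      _ = cfcₙ (fun t ↦ m t * m t + ε • m t) x := by
          congr 1
          ext t
          rcases max_cases (t - ε) 0 with h | h <;> simp only [m, h.1, smul_eq_mul] <;> ring
      _ = cutDown ε x * cutDown ε x + ε • cutDown ε x := by
          rw [cfcₙ_add (fun t ↦ m t * m t) (fun t ↦ ε • m t) x, cfcₙ_mul m m x, cfcₙ_smul ε m x]
          rfl
  rw [hleft, add_mul, smul_mul_assoc]

lemma cutDown_mul_mul_self_le_conj {x y : R} (hx : 0 ≤ x) (hy : 0 ≤ y) {h ε : ℝ} (hh : 0 ≤ h)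
    (hε : 0 ≤ ε) (hxy : ‖x - y‖ ≤ h) :
    cutDown (ε + h) x * cutDown (ε + h) x * cutDown (ε + h) x ≤
      cutDown (ε + h) x * cutDown ε y * cutDown (ε + h) x := by
  set g := cutDown (ε + h) x
  have hg : star g = g := (IsSelfAdjoint.of_nonneg (cutDown_nonneg _ _)).star_eq
  have hgg : 0 ≤ g * g := by simpa only [hg] using star_mul_self_nonneg g
  have hconj {d : R} (hd : IsSelfAdjoint d) {C : ℝ} (hdC : ‖d‖ ≤ C) :
      g * d * g ≤ C • (g * g) := by
    have := CStarAlgebra.star_left_conjugate_le_norm_smul (a := g) hd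
    rw [hg] at this
    exact this.trans (smul_le_smul_of_nonneg_right hdC hgg)
  have hy' : ‖y - cutDown ε y‖ ≤ ε := norm_sub_rev y _ ▸ norm_cutDown_sub_le hy hε
  have hsum := add_le_add (hconj ((IsSelfAdjoint.of_nonneg hx).sub (.of_nonneg hy)) hxy)
    (hconj ((IsSelfAdjoint.of_nonneg hy).sub (.of_nonneg (cutDown_nonneg ε y))) hy')
  have hgx : g * x * g = g * g * g + (ε + h) • (g * g) := cutDown_mul_mul_cutDown hx (by positivity)
  calc g * g * g = g * x * g - (ε + h) • (g * g) := by rw [hgx, add_sub_cancel_right]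
    _ = g * (x - y) * g + g * (y - cutDown ε y) * g + g * cutDown ε y * g -
          (ε + h) • (g * g) := by simp only [mul_sub, sub_mul, sub_add_sub_cancel, sub_add_cancel]
    _ ≤ h • (g * g) + ε • (g * g) + g * cutDown ε y * g - (ε + h) • (g * g) := by gcongr
    _ = g * cutDown ε y * g := by rw [add_smul]; abel

/-- Dimension functions only see the cut-downs up to Cuntz comparison, and `(x - (ε + h))₊` is
Cuntz below `(y - ε)₊` as soon as `‖x - y‖ ≤ h` (Rørdam). -/
lemma dTau_cutDown_le_of_norm_sub_le (τ : QuasiTrace R) {x y : R} (hx : 0 ≤ x) (hy : 0 ≤ y)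
    {h ε : ℝ} (hh : 0 ≤ h) (hε : 0 ≤ ε) (hxy : ‖x - y‖ ≤ h) :
    dTau τ (cutDown (ε + h) x) ≤ dTau τ (cutDown ε y) := by
  set g := cutDown (ε + h) x
  have hg0 : 0 ≤ g := cutDown_nonneg _ _
  have hg : star g = g := (IsSelfAdjoint.of_nonneg hg0).star_eq
  have hp : 0 ≤ cutDown ε y := cutDown_nonneg _ _
  have hggg : 0 ≤ g * g * g := by simpa only [hg] using star_left_conjugate_nonneg hg0 g
  have hgpg : 0 ≤ g * cutDown ε y * g := by
    simpa only [hg] using star_left_conjugate_nonneg hp g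
  calc dTau τ g ≤ dTau τ (g * g * g) := dTau_le_dTau_mul_mul_self τ hg0
    _ ≤ dTau τ (g * cutDown ε y * g) := dTau_le_of_le_smul τ hgpg hggg zero_le_one
        (by simpa only [one_smul] using cutDown_mul_mul_self_le_conj hx hy hh hε hxy)
    _ ≤ dTau τ (cutDown ε y) := by simpa only [hg] using dTau_star_mul_mul_le τ hp g

/-- The slice `(x - ε)₊ - (x - (ε + h))₊` of a positive element `x` between the levels `ε` and
`ε + h`, for `0 ≤ ε` and `0 ≤ h`. -/
def slice {B : Type*} [NonUnitalCStarAlgebra B] (h ε : ℝ) (x : B) : B :=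
  cfcₙ (fun t ↦ min h (max (t - ε) 0)) x

lemma apply_cutDown_eq_slice_add (τ : QuasiTrace R) {x : R} (hx : 0 ≤ x) {h ε : ℝ} (hh : 0 ≤ h)
    (hε : 0 ≤ ε) :
    τ.toFun (cutDown ε x) = τ.toFun (slice h ε x) + τ.toFun (cutDown (ε + h) x) := by
  have hsplit (t : ℝ) :
      max (t - ε) 0 = min h (max (t - ε) 0) + max (t - (ε + h)) 0 := by
    rcases max_cases (t - ε) 0 with h₁ | h₁ <;> rcases max_cases (t - (ε + h)) 0 with h₂ | h₂ <;>
      rcases min_cases h (max (t - ε) 0) with h₃ | h₃ <;> linarith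
  have hadd := τ.isQuasitracial.map_cfcₙ_add hx (f := fun t ↦ min h (max (t - ε) 0))
    (g := fun t ↦ max (t - (ε + h)) 0) (by fun_prop) (by simp [hε, hh]) (by fun_prop)
    (max_eq_right (by linarith)) (fun t _ ↦ le_min hh (le_max_right _ _))
    fun t _ ↦ le_max_right _ _
  simp only [← hsplit] at hadd
  exact hadd

lemma apply_slice_le (τ : QuasiTrace R) {x : R} (hx : 0 ≤ x) {h ε : ℝ} (hh : 0 < h)
    (hε : 0 ≤ ε) : τ.toFun (slice h ε x) ≤ ENNReal.ofReal h * dTau τ (cutDown ε x) := by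
  have hslice : slice h ε x = cfcₙ (fun t ↦ min h (max t 0)) (cutDown ε x) := by
    rw [cutDown, ← cfcₙ_comp' (fun t ↦ min h (max t 0)) (fun t ↦ max (t - ε) 0) x (by fun_prop)
      (by simp [hh.le]) (by fun_prop) (by simp [hε])]
    simp only [slice, le_max_right, max_eq_left]
  rw [hslice]
  exact apply_cfcₙ_le_mul_dTau τ (cutDown_nonneg _ _) (by fun_prop) (by simp [hh.le]) hh
    (fun _ _ _ ↦ le_min hh.le (le_max_right _ _)) fun _ _ _ ↦ min_le_left _ _

lemma le_apply_slice (τ : QuasiTrace R) {x : R} (hx : 0 ≤ x) {h ε : ℝ} (hh : 0 < h)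
    (hε : 0 ≤ ε) : ENNReal.ofReal h * dTau τ (cutDown (ε + h) x) ≤ τ.toFun (slice h ε x) := by
  have hm0 : max (0 - (ε + h)) 0 = 0 := max_eq_right (by linarith)
  rw [dTau, ENNReal.mul_iSup]
  refine iSup_le fun n ↦ ?_
  rw [← τ.map_smul h _ hh (fEps_nonneg _ _), fEps, cutDown,
    ← cfcₙ_comp' (cutoff (1 / (n + 1))) (fun t ↦ max (t - (ε + h)) 0) x
      (continuous_cutoff _).continuousOn (cutoff_zero _) (by fun_prop) hm0,
    ← cfcₙ_smul h (fun t ↦ cutoff (1 / (n + 1)) (max (t - (ε + h)) 0)) x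
      ((continuous_cutoff _).comp (by fun_prop)).continuousOn (by rw [hm0, cutoff_zero])]
  refine τ.isQuasitracial.map_cfcₙ_le hx
    (((continuous_cutoff _).comp (by fun_prop)).const_smul h)
    (by rw [hm0, cutoff_zero, smul_zero]) (by fun_prop) (by simp [hε, hh.le])
    (fun _ _ _ ↦ mul_nonneg hh.le (cutoff_nonneg _ _)) fun t _ _ ↦ ?_
  rw [smul_eq_mul]
  rcases le_total t (ε + h) with ht | ht
  · rw [max_eq_right (sub_nonpos.mpr ht), cutoff_zero, mul_zero]
    exact le_min hh.le (le_max_right _ _)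
  · rw [min_eq_left (le_max_of_le_left (by linarith))]
    exact mul_le_of_le_one_right hh.le (cutoff_le_one _ _)

lemma apply_slice_le_of_norm_sub_le (τ : QuasiTrace R) {x y : R} (hx : 0 ≤ x) (hy : 0 ≤ y)
    {h ε : ℝ} (hh : 0 < h) (hε : 0 ≤ ε) (hxy : ‖x - y‖ ≤ h) :
    τ.toFun (slice h (ε + 2 * h) x) ≤ τ.toFun (slice h ε y) :=
  calc τ.toFun (slice h (ε + 2 * h) x)
      ≤ ENNReal.ofReal h * dTau τ (cutDown (ε + 2 * h) x) :=
        apply_slice_le τ hx hh (by positivity)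
    _ = ENNReal.ofReal h * dTau τ (cutDown (ε + h + h) x) := by rw [two_mul, add_assoc]
    _ ≤ ENNReal.ofReal h * dTau τ (cutDown (ε + h) y) := by
        gcongr
        exact dTau_cutDown_le_of_norm_sub_le τ hx hy hh.le (by positivity) hxy
    _ ≤ τ.toFun (slice h ε y) := le_apply_slice τ hy hh hε

lemma cutDown_eq_zero_of_norm_le {x : R} (hx : 0 ≤ x) {ε : ℝ} (h : ‖x‖ ≤ ε) : cutDown ε x = 0 := by
  rw [cutDown, ← cfcₙ_const_zero ℝ x]
  exact cfcₙ_congr fun t ht ↦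
    max_eq_right (by linarith [(mem_Icc_of_mem_quasispectrum hx ht).2])

/-- Monotonicity of quasitraces on noncommuting elements is not in the definition, so the comparison
goes slice by slice through the dimension function. -/
lemma apply_cutDown_le_of_norm_sub_le (τ : QuasiTrace R) {x y : R} (hx : 0 ≤ x) (hy : 0 ≤ y)
    {h ε : ℝ} (hh : 0 < h) (hε : 0 ≤ ε) (hxy : ‖x - y‖ ≤ h) :
    τ.toFun (cutDown (ε + 2 * h) x) ≤ τ.toFun (cutDown ε y) := by
  obtain ⟨N, hN⟩ := exists_nat_ge (‖x‖ / h)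
  have hxN : ‖x‖ ≤ ε + 2 * h + N * h := by
    rw [div_le_iff₀ hh] at hN
    linarith
  clear hN
  induction N generalizing ε with
  | zero =>
    rw [cutDown_eq_zero_of_norm_le hx (by simpa using hxN), τ.map_zero]
    exact zero_le
  | succ N ih =>
    rw [apply_cutDown_eq_slice_add τ hx hh.le (by positivity),
      apply_cutDown_eq_slice_add τ hy hh.le hε]
    refine add_le_add (apply_slice_le_of_norm_sub_le τ hx hy hh hε hxy) ?_
    have := ih (ε := ε + h) (by positivity) (by push_cast at hxN; linarith)
    rwa [add_right_comm] at this

/-! ### Elements of the Pedersen ideal -/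

lemma mem_pedersen_of_mul_eq {B : Type*} [NonUnitalCStarAlgebra B] {f g : B} (h : g * f = f) :
    f ∈ pedersen B := by
  refine Set.mem_iInter₂.mpr fun I ⟨⟨_, _, hadd, _, hmul⟩, hd⟩ ↦ ?_
  obtain ⟨y, hy, hgy⟩ := Metric.mem_closure_iff.mp (hd (Set.mem_univ g)) 1 one_pos
  have hu : ‖((g - y : B) : Unitization ℂ B)‖ < 1 := by rwa [Unitization.norm_inr, ← dist_eq_norm]
  let k : Unitization ℂ B := ↑(Units.oneSub _ hu)⁻¹
  have hk : k * (1 - ((g - y : B) : Unitization ℂ B)) = 1 := Units.inv_mul (Units.oneSub _ hu)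
  have hyf : (1 - ((g - y : B) : Unitization ℂ B)) * f = (y * f : B) := by
    rw [sub_mul, one_mul, ← Unitization.inr_mul, sub_mul, h, ← Unitization.inr_sub, sub_sub_cancel]
  have hf : (f : Unitization ℂ B) = k * (y * f : B) := by rw [← hyf, ← mul_assoc, hk, one_mul]
  have hf' : f = y * (k.fst • f) + k.snd * (y * f) := by
    simpa [mul_smul_comm] using congrArg (fun q : Unitization ℂ B ↦ q.snd) hf
  rw [hf']
  exact hadd _ (hmul y hy _ (Set.mem_univ _)).1 _
    (hmul _ (hmul y hy f (Set.mem_univ _)).1 _ (Set.mem_univ _)).2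

lemma fEps_mem_pedersen {x : R} (hx : 0 ≤ x) {ε : ℝ} (hε : 0 < ε) : fEps ε x ∈ pedersen R :=
  mem_pedersen_of_mul_eq (fEps_half_mul_fEps hε hx)

/-! ### Dimension functions on the stabilization -/

omit [StarOrderedRing R] in
lemma continuous_apply_of_mem_pedersen {x : R} (hx : x ∈ pedersen R) :
    Continuous fun τ : QuasiTrace R ↦ τ.toFun x := by
  have h : Continuous fun (τ : QuasiTrace R) (a : pedersen R) ↦ τ.toFun a := continuous_induced_dom
  exact (continuous_apply (⟨x, hx⟩ : pedersen R)).comp h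

lemma dTau_le_of_mem_closure {S : Set (QuasiTrace R)} {x : R} (hx : 0 ≤ x) {C : ℝ≥0∞}
    (h : ∀ τ ∈ S, dTau τ x ≤ C) {τ : QuasiTrace R} (hτ : τ ∈ closure S) : dTau τ x ≤ C :=
  iSup_le fun _ ↦ closure_minimal
    (fun σ hσ ↦ (apply_fEps_le_dTau σ hx (by positivity)).trans (h σ hσ))
    (isClosed_le (continuous_apply_of_mem_pedersen (fEps_mem_pedersen hx (by positivity)))
      continuous_const) hτ

omit [StarOrderedRing R] in
lemma dTau_zero (τ : QuasiTrace R) : dTau τ 0 = 0 := by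
  simp [dTau, fEps, τ.map_zero]

lemma exists_eq_mul_mul_self_of_nonneg {x : R} (hx : 0 ≤ x) : ∃ r s : R, 0 ≤ s ∧ x = r * s * r := by
  refine ⟨CFC.sqrt (CFC.sqrt x), CFC.sqrt x, CFC.sqrt_nonneg _, ?_⟩
  have hs : CFC.sqrt x * CFC.sqrt x = x := CFC.sqrt_mul_sqrt_self x hx
  have hr : CFC.sqrt (CFC.sqrt x) * CFC.sqrt (CFC.sqrt x) = CFC.sqrt x :=
    CFC.sqrt_mul_sqrt_self _ (CFC.sqrt_nonneg _)
  generalize CFC.sqrt (CFC.sqrt x) = r at hr ⊢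
  generalize CFC.sqrt x = s at hs hr ⊢
  subst hr
  rw [← hs]
  simp only [mul_assoc]

namespace Stabilization

variable (SB : Stabilization A W)

/-- The embedding `a ↦ a ⊗ e_{ii}` of `A` into a diagonal corner, as a star homomorphism. -/
def diagonalHom (i : ℕ) : A →⋆ₙₐ[ℂ] W where
  toFun := SB.emb i i
  map_smul' c x := by simp
  map_zero' := by simp
  map_add' x y := by simp
  map_mul' x y := by rw [SB.emb_mul, if_pos rfl]
  map_star' x := by rw [SB.emb_star]

omit [PartialOrder A] [StarOrderedRing A] [PartialOrder W] [StarOrderedRing W] in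
lemma emb_cfcₙ (i : ℕ) {a : A} (ha : IsSelfAdjoint a) {f : ℝ → ℝ} (hf : Continuous f)
    (hf0 : f 0 = 0) : SB.emb i i (cfcₙ f a) = cfcₙ f (SB.emb i i a) :=
  (SB.diagonalHom i).map_cfcₙ f a hf.continuousOn hf0
    (AddMonoidHomClass.isometry_of_norm (SB.diagonalHom i) (SB.norm_emb i i)).continuous ha
    (ha.map (SB.diagonalHom i))

lemma emb_nonneg (i : ℕ) {a : A} (ha : 0 ≤ a) : 0 ≤ SB.emb i i a :=
  map_nonneg (SB.diagonalHom i) ha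

omit [StarOrderedRing W] in
lemma dTau_emb_zero_le_one {τ : QuasiTrace W} (hτ : τ ∈ QTSet SB) {d : A} (hd : 0 ≤ d) :
    dTau τ (SB.emb 0 0 d) ≤ 1 := by
  refine iSup_le fun n ↦ ?_
  rw [fEps, ← SB.emb_cfcₙ 0 (.of_nonneg hd) (continuous_cutoff _) (cutoff_zero _), ← hτ.out]
  exact le_iSup (fun a : {a : A // 0 ≤ a ∧ ‖a‖ ≤ 1} ↦ τ.toFun (SB.emb 0 0 a))
    ⟨_, fEps_nonneg _ d, norm_fEps_le_one _ d⟩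

omit [StarOrderedRing W] in
lemma dTau_emb_diagonal (i : ℕ) {d : A} (hd : 0 ≤ d) (τ : QuasiTrace W) :
    dTau τ (SB.emb i i d) = dTau τ (SB.emb 0 0 d) := by
  obtain ⟨s, rfl⟩ := CStarAlgebra.nonneg_iff_eq_star_mul_self.mp hd
  have hi := dTau_star_mul_self τ (SB.emb i i s)
  have h0 := dTau_star_mul_self τ (SB.emb i 0 s)
  simp only [SB.emb_star, SB.emb_mul, if_true] at hi h0
  rw [hi, h0]

lemma dTau_sum_emb_le {τ : QuasiTrace W} {C : ℝ≥0∞} {n : ℕ} {s : Fin n → A} (hs : ∀ i, 0 ≤ s i)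
    (hC : ∀ i, dTau τ (SB.emb 0 0 (s i)) ≤ C) : dTau τ (∑ i : Fin n, SB.emb i i (s i)) ≤ n * C := by
  induction n with
  | zero => simp [dTau_zero]
  | succ n ih =>
    rw [Fin.sum_univ_castSucc, dTau_add_of_mul_eq_zero τ
      (Finset.sum_nonneg fun i _ ↦ SB.emb_nonneg _ (hs _)) (SB.emb_nonneg _ (hs _)),
      Nat.cast_succ, add_mul, one_mul, SB.dTau_emb_diagonal _ (hs _)]
    · exact add_le_add (ih (fun i ↦ hs i.castSucc) fun i ↦ hC i.castSucc) (hC _)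
    · refine Finset.sum_mul _ _ _ |>.trans <| Finset.sum_eq_zero fun i _ ↦ ?_
      rw [SB.emb_mul, if_neg (by simp [i.is_lt.ne])]

/-- The algebraic ideal of `W` generated by the corner `A ⊗ e₀₀`. It is written with positive
middle factors, which is what the factorization of elements of the Pedersen ideal uses. -/
def cornerIdeal : Submodule ℂ W :=
  Submodule.span ℂ {w | ∃ (y z : W) (c : A), 0 ≤ c ∧ w = y * SB.emb 0 0 c * z}

omit [StarOrderedRing A] [PartialOrder W] [StarOrderedRing W] in
lemma isIdealIn_cornerIdeal : IsIdealIn W Set.univ (SB.cornerIdeal : Set W) := by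
  refine ⟨Set.subset_univ _, zero_mem _, fun x hx y hy ↦ add_mem hx hy, fun x hx ↦ neg_mem hx,
    fun x hx b _ ↦ ⟨?_, ?_⟩⟩
  · refine (Submodule.span_le (p := SB.cornerIdeal.comap (LinearMap.mulRight ℂ b))).mpr ?_ hx
    rintro _ ⟨y, z, c, hc, rfl⟩
    exact Submodule.subset_span ⟨y, z * b, c, hc, mul_assoc _ _ _⟩
  · refine (Submodule.span_le (p := SB.cornerIdeal.comap (LinearMap.mulLeft ℂ b))).mpr ?_ hx
    rintro _ ⟨y, z, c, hc, rfl⟩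
    exact Submodule.subset_span ⟨b * y, z, c, hc, by simp [mul_assoc]⟩

omit [PartialOrder W] [StarOrderedRing W] in
lemma emb_mem_cornerIdeal (i j : ℕ) (a : A) : SB.emb i j a ∈ SB.cornerIdeal := by
  have ha : a ∈ Submodule.span ℂ {a : A | 0 ≤ a} := by simp [CStarAlgebra.span_nonneg]
  refine (Submodule.span_le (p := SB.cornerIdeal.comap (SB.emb i j))).mpr (fun c hc ↦ ?_) ha
  obtain ⟨r, s, hs, rfl⟩ := exists_eq_mul_mul_self_of_nonneg hc.out
  exact Submodule.subset_span ⟨SB.emb i 0 r, SB.emb 0 j r, s, hs, by simp [SB.emb_mul]⟩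

omit [PartialOrder W] [StarOrderedRing W] in
lemma pedersen_subset_cornerIdeal : pedersen W ⊆ SB.cornerIdeal :=
  Set.biInter_subset_of_mem ⟨SB.isIdealIn_cornerIdeal, fun w _ ↦ closure_mono
    (Submodule.span_le.mpr (by rintro _ ⟨i, j, a, rfl⟩; exact SB.emb_mem_cornerIdeal i j a))
    (SB.dense_span w)⟩

omit [PartialOrder A] [StarOrderedRing A] [PartialOrder W] [StarOrderedRing W] in
lemma sum_mul_emb_mul_sum_emb_mul {n : ℕ} (y z : Fin n → W) (r s : Fin n → A) :
    (∑ i : Fin n, y i * SB.emb 0 i (r i)) * ∑ i : Fin n, SB.emb i 0 (s i) * z i =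
      ∑ i, y i * SB.emb 0 0 (r i * s i) * z i := by
  rw [Finset.sum_mul_sum]
  refine Finset.sum_congr rfl fun i _ ↦ ?_
  have hij (j : Fin n) : y i * SB.emb 0 i (r i) * (SB.emb j 0 (s j) * z j) =
      if i = j then y i * SB.emb 0 0 (r i * s j) * z j else 0 := by
    rw [mul_assoc, ← mul_assoc (SB.emb _ _ _), SB.emb_mul]
    simp only [Fin.ext_iff]
    split_ifs <;> simp [mul_assoc]
  simp [hij]

omit [PartialOrder W] [StarOrderedRing W] in
lemma exists_eq_mul_diagonal_mul {x : W} (hx : x ∈ pedersen W) :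
    ∃ (n : ℕ) (s : Fin n → A) (y z : W), (∀ i, 0 ≤ s i) ∧
      x = y * ((∑ i : Fin n, SB.emb i i (s i)) * z) := by
  obtain ⟨n, f, g, rfl⟩ := Submodule.mem_span_set'.mp (SB.pedersen_subset_cornerIdeal hx)
  choose y z c hc hg using fun i ↦ (g i).2
  choose r s hs hrs using fun i ↦ exists_eq_mul_mul_self_of_nonneg (hc i)
  refine ⟨n, s, ∑ i : Fin n, (f i • y i) * SB.emb 0 i (r i),
    ∑ i : Fin n, SB.emb i 0 (r i) * z i, hs, ?_⟩
  have hz : (∑ i : Fin n, SB.emb i i (s i)) * ∑ i : Fin n, SB.emb i 0 (r i) * z i =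
      ∑ i : Fin n, SB.emb i 0 (s i * r i) * z i := by
    simp only [Finset.sum_mul_sum, ← mul_assoc, SB.emb_mul, Fin.val_inj, ite_mul, zero_mul,
      Finset.sum_ite_eq, Finset.mem_univ, if_true]
  rw [hz, sum_mul_emb_mul_sum_emb_mul]
  refine Finset.sum_congr rfl fun i _ ↦ ?_
  rw [hg, hrs, smul_mul_assoc, smul_mul_assoc, mul_assoc (r i)]

end Stabilization

lemma dTau_mul_le {y k : R} (τ : QuasiTrace R) (hx : 0 ≤ y * k) :
    dTau τ (y * k) ≤ dTau τ (k * star k) := by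
  have hsq : y * k * (y * k) = star k * (star y * y) * k := by
    nth_rw 1 [← (IsSelfAdjoint.of_nonneg hx).star_eq]
    simp only [star_mul, mul_assoc]
  calc dTau τ (y * k) ≤ dTau τ (y * k * (y * k)) := dTau_le_dTau_mul_self τ hx
    _ ≤ dTau τ (star k * k) := hsq ▸ dTau_le_of_le_smul τ (star_mul_self_nonneg _)
      (star_left_conjugate_nonneg (star_mul_self_nonneg _) _) (norm_nonneg (star y * y))
      (CStarAlgebra.star_left_conjugate_le_norm_smul (hb := .star_mul_self y))
    _ = dTau τ (k * star k) := dTau_star_mul_self τ k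

theorem Stabilization.exists_dTau_le_of_mem_pedersen (SB : Stabilization A W) {x : W}
    (hx : x ∈ pedersen W) (hx0 : 0 ≤ x) :
    ∃ n : ℕ, ∀ τ ∈ closure (QTSet SB), dTau τ x ≤ n := by
  obtain ⟨n, s, y, z, hs, rfl⟩ := SB.exists_eq_mul_diagonal_mul hx
  refine ⟨n, fun τ hτ ↦ dTau_le_of_mem_closure hx0 (fun σ hσ ↦ ?_) hτ⟩
  set d := ∑ i : Fin n, SB.emb i i (s i)
  have hd : 0 ≤ d := Finset.sum_nonneg fun i _ ↦ SB.emb_nonneg i (hs i)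
  calc dTau σ (y * (d * z)) ≤ dTau σ (d * z * star (d * z)) := dTau_mul_le σ hx0
    _ ≤ dTau σ d := dTau_le_of_mem_her σ hd (mul_star_self_nonneg _) <| subset_closure
      ⟨z * star z, by rw [star_mul, (IsSelfAdjoint.of_nonneg hd).star_eq]; simp only [mul_assoc]⟩
    _ ≤ n * 1 := SB.dTau_sum_emb_le hs fun i ↦ SB.dTau_emb_zero_le_one hσ (hs i)
    _ = n := mul_one _

/-! ### Compactness of bounded sets of quasitraces -/

/-- The limit of a family of extended nonnegative reals along an ultrafilter, which exists since
`[0, ∞]` is compact. -/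
def ultralimit {ι : Type*} (F : Ultrafilter ι) (u : ι → ℝ≥0∞) : ℝ≥0∞ := (F.map u).lim

lemma tendsto_ultralimit {ι : Type*} (F : Ultrafilter ι) (u : ι → ℝ≥0∞) :
    Tendsto u F (𝓝 (ultralimit F u)) :=
  (F.map u).le_nhds_lim

lemma ultralimit_eq_of_tendsto {ι : Type*} {F : Ultrafilter ι} {u : ι → ℝ≥0∞} {c : ℝ≥0∞}
    (h : Tendsto u F (𝓝 c)) : ultralimit F u = c :=
  tendsto_nhds_unique (tendsto_ultralimit F u) h

lemma ultralimit_mono {ι : Type*} {F : Ultrafilter ι} {u v : ι → ℝ≥0∞}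
    (h : ∀ᶠ i in F, u i ≤ v i) : ultralimit F u ≤ ultralimit F v :=
  le_of_tendsto_of_tendsto (tendsto_ultralimit F u) (tendsto_ultralimit F v) h

omit [StarOrderedRing R] in
lemma IsQuasitracial.ultralimit {ι : Type*} (F : Ultrafilter ι) {φ : ι → R → ℝ≥0∞}
    (h : ∀ i, IsQuasitracial (φ i)) :
    IsQuasitracial fun x ↦ Paper.ultralimit F fun i ↦ φ i x where
  map_zero := ultralimit_eq_of_tendsto (by simp only [(h _).map_zero, tendsto_const_nhds])
  map_smul r a hr ha := ultralimit_eq_of_tendsto (by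
    simp only [(h _).map_smul r a hr ha]
    exact ENNReal.Tendsto.const_mul (tendsto_ultralimit F _) (Or.inr ENNReal.ofReal_ne_top))
  map_add a b ha hb hab := ultralimit_eq_of_tendsto (by
    simp only [(h _).map_add a b ha hb hab]
    exact (tendsto_ultralimit F _).add (tendsto_ultralimit F _))
  map_star_mul_self x := by simp only [(h _).map_star_mul_self]

/-- The functional that agrees with `φ` on positive elements and vanishes on all others, as required
of a `QuasiTrace`. -/
def positiveRestriction (φ : R → ℝ≥0∞) : R → ℝ≥0∞ := {x : R | 0 ≤ x}.indicator φ

omit [StarOrderedRing R] in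
lemma positiveRestriction_of_nonneg {φ : R → ℝ≥0∞} {x : R} (hx : 0 ≤ x) :
    positiveRestriction φ x = φ x :=
  Set.indicator_of_mem (s := {x : R | 0 ≤ x}) hx φ

omit [StarOrderedRing R] in
lemma positiveRestriction_of_not_nonneg {φ : R → ℝ≥0∞} {x : R} (hx : ¬ 0 ≤ x) :
    positiveRestriction φ x = 0 :=
  Set.indicator_of_notMem (s := {x : R | 0 ≤ x}) hx φ

lemma IsQuasitracial.positiveRestriction {φ : R → ℝ≥0∞} (h : IsQuasitracial φ) :
    IsQuasitracial (positiveRestriction φ) where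
  map_zero := by rw [positiveRestriction_of_nonneg le_rfl, h.map_zero]
  map_smul r a hr ha := by
    simp only [positiveRestriction_of_nonneg, smul_nonneg hr.le ha, ha, h.map_smul r a hr ha]
  map_add a b ha hb hab := by
    simp only [positiveRestriction_of_nonneg, add_nonneg ha hb, ha, hb, h.map_add a b ha hb hab]
  map_star_mul_self x := by
    simp only [positiveRestriction_of_nonneg, star_mul_self_nonneg, mul_star_self_nonneg,
      h.map_star_mul_self]

omit [StarOrderedRing R] in
lemma lowerSemicontinuousOn_positiveRestriction_lscRegularization {φ : R → ℝ≥0∞}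
    (hφ : ∀ x y : R, 0 ≤ x → 0 ≤ y → ∀ h ε : ℝ, 0 < h → 0 ≤ ε → ‖x - y‖ ≤ h →
      φ (cutDown (ε + 2 * h) x) ≤ φ (cutDown ε y)) :
    LowerSemicontinuousOn (positiveRestriction (lscRegularization φ)) {x | 0 ≤ x} := by
  intro x hx C hC
  simp only [positiveRestriction_of_nonneg hx, lscRegularization, lt_iSup_iff] at hC
  obtain ⟨ε, hε, hC⟩ := hC
  filter_upwards [mem_nhdsWithin_of_mem_nhds (Metric.ball_mem_nhds x (ε := ε / 4) (by positivity)),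
    self_mem_nhdsWithin] with y hy (hy0 : 0 ≤ y)
  rw [Metric.mem_ball, dist_comm, dist_eq_norm] at hy
  rw [positiveRestriction_of_nonneg hy0]
  calc C < φ (cutDown (ε / 2 + 2 * (ε / 4)) x) := by
        rwa [show ε / 2 + 2 * (ε / 4) = ε by ring]
    _ ≤ φ (cutDown (ε / 2) y) := hφ x y hx hy0 _ _ (by positivity) (by positivity) hy.le
    _ ≤ lscRegularization φ y := le_lscRegularization (by positivity)

lemma apply_le_apply_cutDown_add (τ : QuasiTrace R) {x : R} (hx : 0 ≤ x) {ε : ℝ} (hε : 0 < ε) :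
    τ.toFun x ≤ τ.toFun (cutDown ε x) + ENNReal.ofReal ε * dTau τ x := by
  have hsplit : cfcₙ (fun t : ℝ ↦ max (t - ε) 0 + min t ε) x = x := by
    conv_rhs => rw [← cfcₙ_id' ℝ x (.of_nonneg hx)]
    congr 1
    ext t
    rcases le_total t ε with h | h
    · rw [max_eq_right (by linarith), min_eq_left h, zero_add]
    · rw [max_eq_left (by linarith), min_eq_right h, sub_add_cancel]
  calc τ.toFun x = τ.toFun (cutDown ε x) + τ.toFun (cfcₙ (fun t ↦ min t ε) x) := by
        conv_lhs => rw [← hsplit]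
        exact τ.isQuasitracial.map_cfcₙ_add hx (by fun_prop) (by simpa using hε.le) (by fun_prop)
          (by simpa using hε.le) (fun _ _ ↦ le_max_right _ _) fun t ht ↦ le_min ht hε.le
    _ ≤ _ := by
        gcongr
        exact apply_cfcₙ_le_mul_dTau τ hx (by fun_prop) (by simpa using hε.le) hε
          (fun t ht _ ↦ le_min ht hε.le) fun t _ _ ↦ min_le_right _ _

lemma apply_cutDown_le_mul_dTau (τ : QuasiTrace R) {x : R} (hx : 0 ≤ x) {ε : ℝ} (hε : 0 < ε) :
    τ.toFun (cutDown ε x) ≤ ENNReal.ofReal (‖x‖ + 1) * dTau τ x :=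
  apply_cfcₙ_le_mul_dTau τ hx (by fun_prop) (by simpa using hε.le) (by positivity)
    (fun _ _ _ ↦ le_max_right _ _) fun _ _ ht ↦ max_le (by linarith) (by positivity)

/-- The matrix in `M₂(B)` whose upper left entry is `a` and whose other entries vanish. -/
def upperLeftMatrix {B : Type*} [NonUnitalCStarAlgebra B] (a : B) :
    CStarMatrix (Fin 2) (Fin 2) B :=
  fun i j ↦ if i = 0 ∧ j = 0 then a else 0

lemma upperLeftMatrix_apply {B : Type*} [NonUnitalCStarAlgebra B] (a : B) (i j : Fin 2) :
    upperLeftMatrix a i j = if i = 0 ∧ j = 0 then a else 0 :=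
  rfl

/-- The embedding of `B` into the upper left corner of `M₂(B)`. -/
def upperLeft (B : Type*) [NonUnitalCStarAlgebra B] : B →⋆ₙₐ[ℂ] CStarMatrix (Fin 2) (Fin 2) B where
  toFun := upperLeftMatrix
  map_smul' c x := by
    ext i j; fin_cases i <;> fin_cases j <;> simp [upperLeftMatrix_apply]
  map_zero' := by ext i j; simp [upperLeftMatrix_apply]
  map_add' x y := by
    ext i j; fin_cases i <;> fin_cases j <;> simp [upperLeftMatrix_apply]
  map_mul' x y := by
    ext i j
    fin_cases i <;> fin_cases j <;> simp [upperLeftMatrix_apply, CStarMatrix.mul_apply]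
  map_star' x := by
    ext i j
    fin_cases i <;> fin_cases j <;> simp [upperLeftMatrix_apply, CStarMatrix.star_apply]

lemma nonneg_iff_exists_star_mul_self {x : R} : 0 ≤ x ↔ ∃ y, x = star y * y :=
  CStarAlgebra.nonneg_iff_eq_star_mul_self

lemma upperLeft_nonneg_iff {a : R} : 0 ≤ upperLeft R a ↔ 0 ≤ a := by
  refine ⟨fun h ↦ ?_, fun h ↦ ?_⟩
  · obtain ⟨s, hs⟩ := nonneg_iff_exists_star_mul_self.mp h
    have ha : a = (star s * s) 0 0 := by rw [← hs]; rfl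
    rw [ha, CStarMatrix.mul_apply]
    exact Finset.sum_nonneg fun k _ ↦ star_mul_self_nonneg (s k 0)
  · obtain ⟨s, rfl⟩ := nonneg_iff_exists_star_mul_self.mp h
    simpa only [map_mul, map_star] using star_mul_self_nonneg (upperLeft R s)

lemma QuasiTrace.exists_isQuasitracial_upperLeft (τ : QuasiTrace R) :
    ∃ σ : CStarMatrix (Fin 2) (Fin 2) R → ℝ≥0∞,
      IsQuasitracial σ ∧ ∀ a, σ (upperLeft R a) = τ.toFun a := by
  obtain ⟨σ, hσ, h0, hsmul, hadd, hstar⟩ := τ.exists_matrix_extension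
  have hnn {x : CStarMatrix (Fin 2) (Fin 2) R} := nonneg_iff_exists_star_mul_self (x := x)
  exact ⟨σ, ⟨h0, fun r x hr hx ↦ hsmul r x hr (hnn.mp hx),
    fun x y hx hy hxy ↦ hadd x y (hnn.mp hx) (hnn.mp hy) hxy, hstar⟩, hσ⟩

section Map

variable {B M : Type*} [NonUnitalCStarAlgebra B] [PartialOrder B] [StarOrderedRing B]
  [NonUnitalCStarAlgebra M] [PartialOrder M] [StarOrderedRing M] (D : B →⋆ₙₐ[ℂ] M)

lemma map_cutDown {x : B} (hx : 0 ≤ x) {ε : ℝ} (hε : 0 ≤ ε) :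
    D (cutDown ε x) = cutDown ε (D x) :=
  D.map_cfcₙ (fun t ↦ max (t - ε) 0) x (by fun_prop) (by simpa using hε)
    (map_continuous _) (.of_nonneg hx) ((IsSelfAdjoint.of_nonneg hx).map _)

lemma lscRegularization_map (φ : M → ℝ≥0∞) {x : B} (hx : 0 ≤ x) :
    lscRegularization φ (D x) = lscRegularization (fun y ↦ φ (D y)) x :=
  iSup_congr fun ε ↦ iSup_congr fun hε ↦ by simp only [map_cutDown D hx hε.le]

end Map

namespace QuasiTrace

/-- The lower semicontinuous regularization of the pointwise ultralimit: the pointwise limit of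
quasitraces along an ultrafilter need not be lower semicontinuous. -/
def regularizedLimit (F : Ultrafilter (QuasiTrace R)) : R → ℝ≥0∞ :=
  lscRegularization fun x ↦ ultralimit F fun τ ↦ τ.toFun x

lemma exists_matrix_extension_regularizedLimit (F : Ultrafilter (QuasiTrace R)) :
    ∃ σ : CStarMatrix (Fin 2) (Fin 2) R → ℝ≥0∞, IsQuasitracial σ ∧
      ∀ a, σ (upperLeft R a) = positiveRestriction (regularizedLimit F) a := by
  choose σ hσ hσu using fun τ : QuasiTrace R ↦ τ.exists_isQuasitracial_upperLeft
  refine ⟨_, (IsQuasitracial.ultralimit F hσ).lscRegularization.positiveRestriction, fun a ↦ ?_⟩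
  by_cases ha : 0 ≤ a
  · rw [positiveRestriction_of_nonneg (upperLeft_nonneg_iff.mpr ha),
      positiveRestriction_of_nonneg ha, lscRegularization_map _ _ ha]
    simp only [hσu, regularizedLimit]
  · rw [positiveRestriction_of_not_nonneg (upperLeft_nonneg_iff.not.mpr ha),
      positiveRestriction_of_not_nonneg ha]

lemma isQuasitracial_regularizedLimit (F : Ultrafilter (QuasiTrace R)) :
    IsQuasitracial (positiveRestriction (regularizedLimit F)) :=
  (IsQuasitracial.ultralimit F isQuasitracial).lscRegularization.positiveRestriction

/-- The limit of a family of quasitraces along an ultrafilter on which the dimension functions of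
elements of the Pedersen ideal are bounded. -/
def limit (F : Ultrafilter (QuasiTrace R))
    (hF : ∀ x ∈ pedersen R, 0 ≤ x → ∃ n : ℕ, ∀ᶠ τ in F, dTau τ x ≤ n) : QuasiTrace R where
  toFun := positiveRestriction (regularizedLimit F)
  zero_of_not_nonneg _ ha := positiveRestriction_of_not_nonneg ha
  map_zero := (isQuasitracial_regularizedLimit F).map_zero
  map_smul := (isQuasitracial_regularizedLimit F).map_smul
  map_add_of_commute := (isQuasitracial_regularizedLimit F).map_add
  map_star_mul_self := (isQuasitracial_regularizedLimit F).map_star_mul_self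
  lowerSemicontinuousOn :=
    lowerSemicontinuousOn_positiveRestriction_lscRegularization
      (φ := fun x ↦ ultralimit F fun τ ↦ τ.toFun x) fun _ _ hx hy _ _ hh hε hxy ↦
        ultralimit_mono <| .of_forall fun τ ↦ apply_cutDown_le_of_norm_sub_le τ hx hy hh hε hxy
  finite_on_pedersen a ha ha0 := by
    obtain ⟨n, hn⟩ := hF a ha ha0
    rw [positiveRestriction_of_nonneg ha0]
    refine lt_of_le_of_lt (iSup₂_le fun ε hε ↦ _root_.le_of_tendsto (tendsto_ultralimit F _) ?_)
      (ENNReal.mul_lt_top ENNReal.ofReal_lt_top (ENNReal.natCast_lt_top n) :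
        ENNReal.ofReal (‖a‖ + 1) * n < ∞)
    filter_upwards [hn] with τ hτ
    exact (apply_cutDown_le_mul_dTau τ ha0 hε).trans (by gcongr)
  exists_matrix_extension := by
    obtain ⟨σ, hσ, hσu⟩ := exists_matrix_extension_regularizedLimit F
    have hnn {x : CStarMatrix (Fin 2) (Fin 2) R} := nonneg_iff_exists_star_mul_self (x := x)
    exact ⟨σ, hσu, hσ.map_zero, fun r x hr hx ↦ hσ.map_smul r x hr (hnn.mpr hx),
      fun x y hx hy hxy ↦ hσ.map_add x y (hnn.mpr hx) (hnn.mpr hy) hxy, hσ.map_star_mul_self⟩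

lemma regularizedLimit_eq_ultralimit {F : Ultrafilter (QuasiTrace R)} {x : R} (hx : 0 ≤ x) {n : ℕ}
    (hn : ∀ᶠ τ in F, dTau τ x ≤ n) : regularizedLimit F x = ultralimit F fun τ ↦ τ.toFun x := by
  refine le_antisymm (iSup₂_le fun ε hε ↦ ultralimit_mono <| .of_forall fun τ ↦
    τ.isQuasitracial.map_cutDown_le hx hε.le) ?_
  have hle (ε : ℝ) (hε : 0 < ε) :
      ultralimit F (fun τ ↦ τ.toFun x) ≤ regularizedLimit F x + ENNReal.ofReal ε * n := by
    refine le_trans (le_of_tendsto_of_tendsto (tendsto_ultralimit F _)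
      ((tendsto_ultralimit F fun τ ↦ τ.toFun (cutDown ε x)).add_const (ENNReal.ofReal ε * n)) ?_)
      (add_le_add_left (le_lscRegularization hε) _)
    filter_upwards [hn] with τ hτ
    exact (apply_le_apply_cutDown_add τ hx hε).trans (by gcongr)
  have hlim : Tendsto (fun ε : ℝ ↦ regularizedLimit F x + ENNReal.ofReal ε * n) (𝓝[>] 0)
      (𝓝 (regularizedLimit F x)) := by
    have h0 := (ENNReal.continuous_ofReal.tendsto 0).mono_left (nhdsWithin_le_nhds (s := Set.Ioi 0))
    simpa using (ENNReal.Tendsto.mul_const h0 (.inr (ENNReal.natCast_ne_top n))).const_add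
      (regularizedLimit F x)
  refine ge_of_tendsto hlim ?_
  filter_upwards [self_mem_nhdsWithin] with ε hε using hle ε hε

lemma le_nhds_limit {F : Ultrafilter (QuasiTrace R)}
    (hF : ∀ x ∈ pedersen R, 0 ≤ x → ∃ n : ℕ, ∀ᶠ τ in F, dTau τ x ≤ n) :
    (F : Filter (QuasiTrace R)) ≤ 𝓝 (limit F hF) := by
  rw [nhds_induced, ← tendsto_iff_comap, tendsto_pi_nhds]
  rintro ⟨x, hx⟩
  change Tendsto (fun τ : QuasiTrace R ↦ τ.toFun x) F
    (𝓝 (positiveRestriction (regularizedLimit F) x))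
  by_cases hx0 : 0 ≤ x
  · obtain ⟨n, hn⟩ := hF x hx hx0
    rw [positiveRestriction_of_nonneg hx0, regularizedLimit_eq_ultralimit hx0 hn]
    exact tendsto_ultralimit F _
  · rw [positiveRestriction_of_not_nonneg hx0]
    simp only [fun τ : QuasiTrace R ↦ τ.zero_of_not_nonneg x hx0, tendsto_const_nhds]

end QuasiTrace

theorem isCompact_of_dTau_bounded {S : Set (QuasiTrace R)} (hS : IsClosed S)
    (hbdd : ∀ x ∈ pedersen R, 0 ≤ x → ∃ n : ℕ, ∀ τ ∈ S, dTau τ x ≤ n) : IsCompact S := by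
  rw [isCompact_iff_ultrafilter_le_nhds]
  intro F hF
  have hFS : ∀ᶠ τ in F, τ ∈ S := by simpa using hF
  have hlim := QuasiTrace.le_nhds_limit (F := F) fun x hx hx0 ↦
    (hbdd x hx hx0).imp fun n hn ↦ hFS.mono hn
  exact ⟨_, hS.mem_of_tendsto hlim hFS, hlim⟩

lemma Stabilization.isCompact_closure_QTSet (SB : Stabilization A W) :
    IsCompact (closure (QTSet SB)) :=
  isCompact_of_dTau_bounded isClosed_closure fun _ ↦ SB.exists_dTau_le_of_mem_pedersen

/-! ### The uniform gap -/

omit [StarOrderedRing R] in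
lemma dTau_le_apply_fEps_add_of_omegaOn_eq_zero {S : Set (QuasiTrace R)} {a : R}
    (hω : omegaOn S a = 0) {κ : ℝ≥0∞} (hκ : 0 < κ) :
    ∃ n : ℕ, ∀ τ ∈ S, dTau τ a ≤ τ.toFun (fEps (1 / (n + 1)) a) + κ := by
  obtain ⟨n, hn⟩ := iInf_lt_iff.mp (hω.trans_lt hκ)
  refine ⟨n, fun τ hτ ↦ ?_⟩
  rw [add_comm, ← tsub_le_iff_right]
  exact (le_iSup₂ (f := fun (τ : QuasiTrace R) (_ : τ ∈ S) ↦
    dTau τ a - τ.toFun (fEps (1 / (n + 1)) a)) τ hτ).trans hn.le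

lemma exists_isOpen_dTau_add_le {S : Set (QuasiTrace R)} {a b : R} (ha : 0 ≤ a) (hb : 0 ≤ b)
    (hω : omegaOn S a = 0) {τ₀ : QuasiTrace R} (hlt : dTau τ₀ a < dTau τ₀ b) :
    ∃ U : Set (QuasiTrace R), IsOpen U ∧ τ₀ ∈ U ∧ ∃ (n : ℕ) (κ : NNReal), 0 < κ ∧
      ∀ τ ∈ S ∩ U, dTau τ a + κ ≤ τ.toFun (fEps (1 / (n + 1)) b) := by
  obtain ⟨n, hn⟩ := lt_iSup_iff.mp hlt
  obtain ⟨r, hr, hlt⟩ := ENNReal.lt_iff_exists_add_pos_lt.mp hn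
  obtain ⟨m, hm⟩ := dTau_le_apply_fEps_add_of_omegaOn_eq_zero hω (κ := (r / 2 : NNReal))
    (by exact_mod_cast half_pos hr)
  refine ⟨{τ | τ.toFun (fEps (1 / (m + 1)) a) + r < τ.toFun (fEps (1 / (n + 1)) b)},
    isOpen_lt
      ((continuous_apply_of_mem_pedersen (fEps_mem_pedersen ha (by positivity))).add
        continuous_const)
      (continuous_apply_of_mem_pedersen (fEps_mem_pedersen hb (by positivity))),
    (add_le_add_left (apply_fEps_le_dTau τ₀ ha (by positivity)) _).trans_lt hlt,
    n, r / 2, half_pos hr, fun τ ⟨hτS, hτU⟩ ↦ ?_⟩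
  calc dTau τ a + (r / 2 : NNReal)
      ≤ τ.toFun (fEps (1 / (m + 1)) a) + (r / 2 : NNReal) + (r / 2 : NNReal) := by
        gcongr; exact hm τ hτS
    _ = τ.toFun (fEps (1 / (m + 1)) a) + r := by rw [add_assoc, ← ENNReal.coe_add, add_halves]
    _ ≤ τ.toFun (fEps (1 / (n + 1)) b) := le_of_lt hτU

theorem exists_dTau_add_le_apply_fEps {S : Set (QuasiTrace R)} (hS : IsCompact S) {a b : R}
    (ha : 0 ≤ a) (hb : 0 ≤ b) (hω : omegaOn S a = 0) (hlt : ∀ τ ∈ S, dTau τ a < dTau τ b) :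
    ∃ (n : ℕ) (κ : NNReal), 0 < κ ∧ ∀ τ ∈ S, dTau τ a + κ ≤ τ.toFun (fEps (1 / (n + 1)) b) := by
  refine hS.induction_on (p := fun s ↦ ∃ (n : ℕ) (κ : NNReal), 0 < κ ∧ ∀ τ ∈ s,
    dTau τ a + κ ≤ τ.toFun (fEps (1 / (n + 1)) b)) ⟨0, 1, one_pos, by simp⟩ ?_ ?_ fun τ₀ hτ₀ ↦ ?_
  · rintro s t hst ⟨n, κ, hκ, h⟩
    exact ⟨n, κ, hκ, fun τ hτ ↦ h τ (hst hτ)⟩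
  · rintro s t ⟨n, κ, hκ, h⟩ ⟨n', κ', hκ', h'⟩
    refine ⟨max n n', min κ κ', lt_min hκ hκ', ?_⟩
    rintro τ (hτ | hτ)
    · exact ((by gcongr; exact min_le_left _ _ : _ ≤ dTau τ a + κ).trans (h τ hτ)).trans
        (apply_fEps_one_div_mono τ hb (le_max_left n n'))
    · exact ((by gcongr; exact min_le_right _ _ : _ ≤ dTau τ a + κ').trans (h' τ hτ)).trans
        (apply_fEps_one_div_mono τ hb (le_max_right n n'))
  · obtain ⟨U, hU, hτU, n, κ, hκ, h⟩ := exists_isOpen_dTau_add_le ha hb hω (hlt τ₀ hτ₀)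
    exact ⟨_, inter_mem self_mem_nhdsWithin (mem_nhdsWithin_of_mem_nhds (hU.mem_nhds hτU)),
      n, κ, hκ, h⟩

/-! ### Square-zero elements and minimal projections -/

omit [PartialOrder R] [StarOrderedRing R] in
lemma IsSimpleCStar.eq_top_of_isClosed (hs : IsSimpleCStar R) {V : Submodule ℂ R}
    (hV : IsClosed (V : Set R)) (hl : ∀ a, ∀ x ∈ V, a * x ∈ V) (hr : ∀ a, ∀ x ∈ V, x * a ∈ V)
    {x : R} (hxV : x ∈ V) (hx : x ≠ 0) : V = ⊤ := by
  set I : TwoSidedIdeal R := .mk' V V.zero_mem V.add_mem V.neg_mem (hl _ _) (hr _ _)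
  have hI : (I : Set R) = V := TwoSidedIdeal.coe_mk' ..
  refine SetLike.coe_injective ?_
  rw [Submodule.top_coe, ← hI]
  refine (hs.2 I (hI ▸ hV)).resolve_left fun h ↦ hx ?_
  rwa [← SetLike.mem_coe, ← hI, h, Set.mem_singleton_iff] at hxV

omit [PartialOrder R] [StarOrderedRing R] in
lemma IsSimpleCStar.exists_mul_mul_ne_zero (hs : IsSimpleCStar R) {x y : R} (hx : x ≠ 0)
    (hy : y ≠ 0) : ∃ w, x * w * y ≠ 0 := by
  by_contra! hxy
  let V : Submodule ℂ R :=
    { carrier := {z | ∀ w, x * w * z = 0}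
      zero_mem' := by simp
      add_mem' := fun ha hb w ↦ by rw [mul_add, ha w, hb w, add_zero]
      smul_mem' := fun k a ha w ↦ by rw [mul_smul_comm, ha w, smul_zero] }
  have hV : V = ⊤ := by
    refine hs.eq_top_of_isClosed ?_ (fun a z hz w ↦ ?_) (fun a z hz w ↦ ?_) hxy hy
    · change IsClosed {z | ∀ w, x * w * z = 0}
      rw [Set.ofPred_forall]
      exact isClosed_iInter fun w ↦ isClosed_eq (by fun_prop) continuous_const
    · rw [← mul_assoc, mul_assoc x, hz]
    · rw [← mul_assoc, hz w, zero_mul]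
  have hxx : star (x * star x) * (x * star x) = 0 := by
    rw [star_mul, star_star]
    exact (hV ▸ Submodule.mem_top : x * star x ∈ V) (star x)
  rw [CStarRing.star_mul_self_eq_zero_iff, CStarRing.mul_star_self_eq_zero_iff] at hxx
  exact hx hxx

omit [PartialOrder R] [StarOrderedRing R] in
lemma IsSimpleCStar.span_mul_mul_eq_top (hs : IsSimpleCStar R) (halg : pedersen R = Set.univ)
    {p : R} (hp : p ≠ 0) (hpp : p * p = p) :
    Submodule.span ℂ {z : R | ∃ x y, z = x * p * y} = ⊤ := by
  set J := Submodule.span ℂ {z : R | ∃ x y, z = x * p * y}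
  have hl (a : R) : ∀ x ∈ J, a * x ∈ J := fun x hx ↦ by
    induction hx using Submodule.span_induction with
    | mem _ h =>
      obtain ⟨y, z, rfl⟩ := h
      exact Submodule.subset_span ⟨a * y, z, by simp only [mul_assoc]⟩
    | zero => simp
    | add x y _ _ hx hy => rw [mul_add]; exact J.add_mem hx hy
    | smul k x _ hx => rw [mul_smul_comm]; exact J.smul_mem k hx
  have hr (a : R) : ∀ x ∈ J, x * a ∈ J := fun x hx ↦ by
    induction hx using Submodule.span_induction with
    | mem _ h =>
      obtain ⟨y, z, rfl⟩ := h
      exact Submodule.subset_span ⟨y, z * a, by simp only [mul_assoc]⟩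
    | zero => simp
    | add x y _ _ hx hy => rw [add_mul]; exact J.add_mem hx hy
    | smul k x _ hx => rw [smul_mul_assoc]; exact J.smul_mem k hx
  have hdense : J.topologicalClosure = ⊤ :=
    hs.eq_top_of_isClosed J.isClosed_topologicalClosure
      (fun a x hx ↦ map_mem_closure (f := (a * ·)) (by fun_prop) hx (hl a))
      (fun a x hx ↦ map_mem_closure (f := (· * a)) (by fun_prop) hx (hr a))
      (subset_closure (Submodule.subset_span ⟨p, p, by rw [hpp, hpp]⟩)) hp
  refine eq_top_iff.mpr fun x _ ↦ ?_
  have hx : x ∈ pedersen R := halg ▸ Set.mem_univ x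
  exact Set.mem_iInter₂.mp hx J ⟨⟨Set.subset_univ _, J.zero_mem, fun _ hx _ ↦ J.add_mem hx,
    fun _ ↦ J.neg_mem, fun x hx b _ ↦ ⟨hr b x hx, hl b x hx⟩⟩,
    fun y _ ↦ (hdense ▸ Submodule.mem_top : y ∈ J.topologicalClosure)⟩

lemma norm_mem_quasispectrum {x : R} (hx : 0 ≤ x) : ‖x‖ ∈ quasispectrum ℝ x := by
  rw [Unitization.quasispectrum_eq_spectrum_inr' ℝ ℂ x, ← Unitization.norm_inr (𝕜 := ℂ) x]
  exact CStarAlgebra.norm_mem_spectrum_of_nonneg (Unitization.inr_nonneg_iff.mpr hx)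

/-- The corner `cRc` is reduced: it contains no nonzero element of square zero. -/
def HasReducedCorner (c : R) : Prop :=
  ∀ w, c * w * c * (c * w * c) = 0 → c * w * c = 0

namespace HasReducedCorner

omit [PartialOrder R] [StarOrderedRing R] in
lemma of_mul_eq {c d u v : R} (hc : HasReducedCorner c) (hu : c * u = d) (hv : v * c = d) :
    HasReducedCorner d := fun w ↦ by
  have hd : d * w * d = c * (u * w * v) * c := by
    nth_rewrite 1 [← hu]
    simp only [← hv, mul_assoc]
  rw [hd]
  exact hc _

-- Otherwise primeness gives a nonzero `(c * u) * w * (v * c)`, an element of the corner of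
-- square zero.
omit [PartialOrder R] [StarOrderedRing R] in
lemma mul_eq_zero_or {c u v : R} (hs : IsSimpleCStar R) (hc : HasReducedCorner c)
    (h : v * c * (c * u) = 0) : c * u = 0 ∨ v * c = 0 := by
  by_contra! hne
  obtain ⟨w, hw⟩ := hs.exists_mul_mul_ne_zero hne.1 hne.2
  have hcorner : c * u * w * (v * c) = c * (u * w * v) * c := by simp only [mul_assoc]
  refine hw (hcorner ▸ hc _ ?_)
  calc c * (u * w * v) * c * (c * (u * w * v) * c)
      = c * u * w * (v * c * (c * u)) * w * (v * c) := by simp only [mul_assoc]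
    _ = 0 := by simp [h]

lemma forall_or_forall {x : R} (hs : IsSimpleCStar R) (hx : 0 ≤ x) (hc : HasReducedCorner x)
    {f g : ℝ → ℝ} (hf : Continuous f) (hf0 : f 0 = 0) (hg : Continuous g) (hg0 : g 0 = 0)
    (hfg : ∀ t, g t * f t = 0) :
    (∀ t ∈ quasispectrum ℝ x, t * f t = 0) ∨ ∀ t ∈ quasispectrum ℝ x, t * g t = 0 := by
  have hxs : IsSelfAdjoint x := .of_nonneg hx
  have hxf : x * cfcₙ f x = cfcₙ (fun t ↦ t * f t) x := by
    rw [cfcₙ_mul (fun t ↦ t) f x, cfcₙ_id' ℝ x]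
  have hgx : cfcₙ g x * x = cfcₙ (fun t ↦ t * g t) x := by
    simp_rw [mul_comm _ (g _)]
    rw [cfcₙ_mul g (fun t ↦ t) x, cfcₙ_id' ℝ x]
  have hprod : cfcₙ g x * x * (x * cfcₙ f x) = 0 := by
    rw [hxf, hgx, ← cfcₙ_mul .., ← cfcₙ_const_zero ℝ x]
    exact cfcₙ_congr fun t _ ↦ by linear_combination t * t * hfg t
  have hvanish {k : ℝ → ℝ} (hk : Continuous k) (h : cfcₙ (fun t ↦ t * k t) x = 0) :
      ∀ t ∈ quasispectrum ℝ x, t * k t = 0 := fun t ht ↦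
    (eqOn_of_cfcₙ_eq_cfcₙ (h.trans (cfcₙ_const_zero ℝ x).symm) hxs :) ht
  exact (hc.mul_eq_zero_or hs hprod).imp (fun h ↦ hvanish hf (hxf ▸ h))
    fun h ↦ hvanish hg (hgx ▸ h)

lemma quasispectrum_subset {x : R} (hs : IsSimpleCStar R) (hx : 0 ≤ x) (hc : HasReducedCorner x) :
    quasispectrum ℝ x ⊆ {0, ‖x‖} := by
  intro t ht
  obtain ⟨ht0, htx⟩ := mem_Icc_of_mem_quasispectrum hx ht
  by_contra! hne
  simp only [Set.mem_insert_iff, Set.mem_singleton_iff, not_or] at hne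
  obtain ⟨s, hts, hsx⟩ := exists_between (lt_of_le_of_ne htx hne.2)
  have hs0 : 0 < s := ht0.trans_lt hts
  rcases hc.forall_or_forall hs hx (f := fun u ↦ max (u - s) 0) (g := fun u ↦ u * max (s - u) 0)
    (by fun_prop) (by simpa using hs0.le) (by fun_prop) (by simp)
    (fun u ↦ by rcases le_total u s with h | h <;> simp [h]) with h | h
  · refine (mul_pos (hs0.trans hsx) ?_).ne' (h _ (norm_mem_quasispectrum hx))
    exact lt_max_of_lt_left (sub_pos.mpr hsx)
  · have htpos : 0 < t := lt_of_le_of_ne' ht0 hne.1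
    refine (mul_pos htpos (mul_pos htpos ?_)).ne' (h t ht)
    exact lt_max_of_lt_left (sub_pos.mpr hts)

lemma mul_self_eq {x : R} (hs : IsSimpleCStar R) (hx : 0 ≤ x) (hc : HasReducedCorner x) :
    x * x = ‖x‖ • x := by
  conv_lhs => rw [← cfcₙ_id' ℝ x, ← cfcₙ_mul (fun t : ℝ ↦ t) (fun t ↦ t) x]
  conv_rhs => enter [2]; rw [← cfcₙ_id' ℝ x]
  rw [← cfcₙ_smul ‖x‖ (fun t : ℝ ↦ t) x]
  refine cfcₙ_congr fun t ht ↦ ?_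
  rcases hc.quasispectrum_subset hs hx ht with rfl | rfl <;> simp

end HasReducedCorner

/-- A minimal projection: a nonzero projection `p` with `pRp = ℂp`. -/
structure IsMinimalProjection (p : R) : Prop where
  ne_zero : p ≠ 0
  star_eq : star p = p
  mul_self : p * p = p
  exists_smul : ∀ x, ∃ r : ℂ, p * x * p = r • p

lemma HasReducedCorner.eq_norm_smul {p y : R} (hs : IsSimpleCStar R) (hp : HasReducedCorner p)
    (hpp : p * p = p) (hy : 0 ≤ y) (hpy : p * y = y) (hyp : y * p = y) : y = ‖y‖ • p := by
  have hyy := (hp.of_mul_eq hpy hyp).mul_self_eq hs hy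
  rcases hp.mul_eq_zero_or hs (u := ‖y‖ • p - y) (v := y) (by
    rw [mul_sub, hpy, mul_smul_comm, hpp, hyp, mul_sub, mul_smul_comm, hyp, hyy, sub_self])
    with h | h
  · rw [mul_sub, hpy, mul_smul_comm, hpp, sub_eq_zero] at h
    exact h.symm
  · simp [show y = 0 by rw [← hyp, h]]

lemma HasReducedCorner.isMinimalProjection {c : R} (hs : IsSimpleCStar R) (hc0 : 0 ≤ c)
    (hne : c ≠ 0) (hc : HasReducedCorner c) : IsMinimalProjection (‖c‖⁻¹ • c) := by
  have hcc := hc.mul_self_eq hs hc0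
  have hnorm : ‖c‖ ≠ 0 := norm_ne_zero_iff.mpr hne
  set p := ‖c‖⁻¹ • c with hp
  have hps : star p = p := (IsSelfAdjoint.of_nonneg (smul_nonneg (by positivity) hc0)).star_eq
  have hpp : p * p = p := by
    rw [hp, smul_mul_smul_comm, hcc, smul_smul, mul_assoc, inv_mul_cancel₀ hnorm, mul_one]
  have hcp : c * (‖c‖⁻¹ • p) = p := by
    rw [mul_smul_comm, hp, mul_smul_comm, hcc, smul_smul, smul_smul, mul_assoc,
      inv_mul_cancel₀ hnorm, mul_one]
  have hpc : ‖c‖⁻¹ • p * c = p := by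
    rw [smul_mul_assoc, hp, smul_mul_assoc, hcc, smul_smul, smul_smul, mul_assoc,
      inv_mul_cancel₀ hnorm, mul_one]
  refine ⟨smul_ne_zero (inv_ne_zero hnorm) hne, hps, hpp, fun x ↦ ?_⟩
  clear_value p
  have hx : x ∈ Submodule.span ℂ {a : R | 0 ≤ a} :=
    CStarAlgebra.span_nonneg (A := R) ▸ Submodule.mem_top
  induction hx using Submodule.span_induction with
  | mem y hy =>
    have hpyp : 0 ≤ p * y * p := by simpa only [hps] using star_left_conjugate_nonneg hy p
    exact ⟨(‖p * y * p‖ : ℂ), (hc.of_mul_eq hcp hpc).eq_norm_smul hs hpp hpyp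
      (by simp only [← mul_assoc, hpp]) (by simp only [mul_assoc, hpp])⟩
  | zero => exact ⟨0, by simp⟩
  | add y z _ _ hy hz =>
    obtain ⟨⟨r, hr⟩, s, hs⟩ := hy, hz
    exact ⟨r + s, by rw [mul_add, add_mul, hr, hs, add_smul]⟩
  | smul k y _ hy =>
    obtain ⟨r, hr⟩ := hy
    exact ⟨k * r, by rw [mul_smul_comm, smul_mul_assoc, hr, mul_smul]⟩

namespace IsMinimalProjection

omit [StarOrderedRing R] in
lemma finiteDimensional {p : R} (hp : IsMinimalProjection p) (hσ : SigmaUnital R)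
    (hs : IsSimpleCStar R) (halg : pedersen R = Set.univ) : FiniteDimensional ℂ R := by
  obtain ⟨h, -, hh⟩ := hσ
  obtain ⟨n, c, g, hsum⟩ := Submodule.mem_span_set'.mp
    (hs.span_mul_mul_eq_top halg hp.ne_zero hp.mul_self ▸ Submodule.mem_top : h ∈ _)
  choose x y hg using fun i ↦ (g i).2
  choose χ hχ using hp.exists_smul
  set V : Submodule ℂ R := .span ℂ (Set.range fun i : Fin n × Fin n ↦ x i.1 * p * y i.2)
  have hV : FiniteDimensional ℂ V := .span_of_finite ℂ (Set.finite_range _)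
  have hcorner (a : R) : h * a * h ∈ V := by
    simp only [← hsum, Finset.sum_mul, Finset.mul_sum, smul_mul_assoc, mul_smul_comm]
    refine V.sum_mem fun j _ ↦ V.smul_mem _ (V.sum_mem fun i _ ↦ V.smul_mem _ ?_)
    have hmul : (g i : R) * a * g j = χ (y i * a * x j) • (x i * p * y j) := by
      rw [← smul_mul_assoc, ← mul_smul_comm, ← hχ, hg i, hg j]
      simp only [mul_assoc]
    rw [hmul]
    exact V.smul_mem _ (Submodule.subset_span ⟨(i, j), rfl⟩)
  have hV_top : V = ⊤ := eq_top_iff.mpr fun z _ ↦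
    closure_minimal (by rintro _ ⟨a, rfl⟩; exact hcorner a) V.closed_of_finiteDimensional
      (hh ▸ Set.mem_univ z : z ∈ her h)
  rw [hV_top] at hV
  exact Module.Finite.equiv Submodule.topEquiv

lemma exists_normalize {p z : R} (hp : IsMinimalProjection p) (hz : z ≠ 0) (hzp : z * p = z) :
    ∃ s : ℂ, star (s • z) * (s • z) = p := by
  have hpz : p * star z = star z := by rw [← hp.star_eq, ← star_mul, hzp]
  obtain ⟨r, hr⟩ := hp.exists_smul (star z * z)
  have hzz : star z * z = r • p := by
    rw [← hr, ← mul_assoc, hpz, mul_assoc, hzp]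
  have hp0 : 0 ≤ p := by simpa only [hp.star_eq, hp.mul_self] using star_mul_self_nonneg p
  have hr_conj : (starRingEnd ℂ) r = r := by
    refine smul_left_injective ℂ hp.ne_zero ?_
    have := (IsSelfAdjoint.star_mul_self z).star_eq
    rwa [hzz, star_smul, hp.star_eq] at this
  obtain ⟨ρ, rfl⟩ := Complex.conj_eq_iff_real.mp hr_conj
  have hρ : 0 < ρ := by
    by_contra! hρ
    refine hz ((CStarRing.star_mul_self_eq_zero_iff z).mp
      (le_antisymm ?_ (star_mul_self_nonneg z)))
    rw [hzz, Complex.coe_smul, ← neg_nonneg, ← neg_smul]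
    exact smul_nonneg (neg_nonneg.mpr hρ) hp0
  refine ⟨((√ρ)⁻¹ : ℝ), ?_⟩
  have hsq : (√ρ)⁻¹ * (√ρ)⁻¹ * ρ = 1 := by
    rw [← mul_inv, Real.mul_self_sqrt hρ.le, inv_mul_cancel₀ hρ.ne']
  rw [star_smul, smul_mul_smul_comm, hzz, smul_smul, Complex.star_def, Complex.conj_ofReal]
  norm_cast
  rw [hsq, one_smul]

end IsMinimalProjection

/-- An orthonormal family in the Hilbert space `Rp` with inner product `⟪x, y⟫ • p = x⋆y`, for a
minimal projection `p`. -/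
structure IsOrthonormalFrame {n : ℕ} (p : R) (e : Fin n → R) : Prop where
  mul_eq : ∀ i, e i * p = e i
  star_mul_eq : ∀ i j, star (e i) * e j = if i = j then p else 0

namespace IsOrthonormalFrame

variable {n : ℕ} {p : R} {e : Fin n → R}

omit [PartialOrder R] [StarOrderedRing R] in
lemma mul_star_eq (he : IsOrthonormalFrame p e) (hp : IsMinimalProjection p) (i : Fin n) :
    p * star (e i) = star (e i) := by
  rw [← hp.star_eq, ← star_mul, he.mul_eq]

omit [PartialOrder R] [StarOrderedRing R] in
lemma le_finrank [FiniteDimensional ℂ R] (he : IsOrthonormalFrame p e) (hp : p ≠ 0) :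
    n ≤ Module.finrank ℂ R := by
  have hli : LinearIndependent ℂ e := Fintype.linearIndependent_iff.mpr fun g hg i ↦ by
    have h := congrArg (star (e i) * ·) hg
    simp only [Finset.mul_sum, mul_smul_comm, he.star_mul_eq, mul_zero, smul_ite, smul_zero,
      Finset.sum_ite_eq, Finset.mem_univ, if_true] at h
    exact (smul_eq_zero.mp h).resolve_right hp
  simpa using hli.fintype_card_le_finrank

omit [PartialOrder R] [StarOrderedRing R] in
lemma star_mul_sum_mul (he : IsOrthonormalFrame p e) (hp : IsMinimalProjection p) (i : Fin n)
    (x : R) : star (e i) * ((∑ k, e k * star (e k)) * x) = star (e i) * x := by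
  simp only [Finset.sum_mul, Finset.mul_sum, ← mul_assoc, he.star_mul_eq, ite_mul, zero_mul,
    Finset.sum_ite_eq, Finset.mem_univ, if_true, he.mul_star_eq hp]

omit [PartialOrder R] [StarOrderedRing R] in
lemma snoc (he : IsOrthonormalFrame p e) {z : R} (hzp : z * p = z) (hzz : star z * z = p)
    (hez : ∀ i, star (e i) * z = 0) : IsOrthonormalFrame p (Fin.snoc (α := fun _ ↦ R) e z) := by
  have hze (i) : star z * e i = 0 := by rw [← star_star (e i), ← star_mul, hez, star_zero]
  refine ⟨Fin.lastCases ?_ fun i ↦ ?_,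
    Fin.lastCases (Fin.lastCases ?_ fun j ↦ ?_) fun i ↦ Fin.lastCases ?_ fun j ↦ ?_⟩
  · rw [Fin.snoc_last, hzp]
  · rw [Fin.snoc_castSucc, he.mul_eq]
  · rw [Fin.snoc_last, if_pos rfl, hzz]
  · rw [Fin.snoc_last, Fin.snoc_castSucc, hze, if_neg (Fin.castSucc_ne_last j).symm]
  · rw [Fin.snoc_last, Fin.snoc_castSucc, hez, if_neg (Fin.castSucc_ne_last i)]
  · simp only [Fin.snoc_castSucc, he.star_mul_eq, Fin.castSucc_inj]

end IsOrthonormalFrame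

-- A frame of maximal length: otherwise `x * p - u * (x * p)` could be normalized and appended.
lemma IsMinimalProjection.exists_frame [FiniteDimensional ℂ R] {p : R}
    (hp : IsMinimalProjection p) : ∃ (n : ℕ) (e : Fin n → R), IsOrthonormalFrame p e ∧
      ∀ x, (∑ k, e k * star (e k)) * (x * p) = x * p := by
  obtain ⟨n, ⟨e, he⟩, hmax⟩ : ∃ n, (∃ e : Fin n → R, IsOrthonormalFrame p e) ∧
      ¬ ∃ e : Fin (n + 1) → R, IsOrthonormalFrame p e := by
    by_contra! hsucc
    have hall (n : ℕ) : ∃ e : Fin n → R, IsOrthonormalFrame p e := by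
      induction n with
      | zero => exact ⟨Fin.elim0, ⟨fun i ↦ i.elim0, fun i ↦ i.elim0⟩⟩
      | succ n ih => exact hsucc n ih
    obtain ⟨e, he⟩ := hall (Module.finrank ℂ R + 1)
    exact (he.le_finrank hp.ne_zero).not_gt (Nat.lt_succ_self _)
  refine ⟨n, e, he, fun x ↦ ?_⟩
  by_contra hne
  set z : R := x * p - (∑ k, e k * star (e k)) * (x * p) with hz
  have hzp : z * p = z := by simp only [hz, sub_mul, mul_assoc, hp.mul_self]
  have hez (i) : star (e i) * z = 0 := by rw [hz, mul_sub, he.star_mul_sum_mul hp, sub_self]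
  obtain ⟨s, hs⟩ := hp.exists_normalize (sub_ne_zero_of_ne (Ne.symm hne)) hzp
  exact hmax ⟨_, he.snoc (z := s • z) (by rw [smul_mul_assoc, hzp]) hs
    fun i ↦ by rw [mul_smul_comm, hez, smul_zero]⟩

namespace IsOrthonormalFrame

variable {n : ℕ} {p : R} {e : Fin n → R}

/-- The matrix of left multiplication by `a` in an orthonormal frame, with entries
`⟪eᵢ, a eⱼ⟫`. -/
def toMatrix (hp : IsMinimalProjection p) (e : Fin n → R) (a : R) : Matrix (Fin n) (Fin n) ℂ :=
  .of fun i j ↦ (hp.exists_smul (star (e i) * a * e j)).choose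

omit [PartialOrder R] [StarOrderedRing R] in
lemma star_mul_mul_eq (he : IsOrthonormalFrame p e) (hp : IsMinimalProjection p) (a : R)
    (i j : Fin n) : star (e i) * a * e j = toMatrix hp e a i j • p := by
  rw [toMatrix, Matrix.of_apply, ← (hp.exists_smul _).choose_spec, ← mul_assoc, ← mul_assoc,
    he.mul_star_eq hp, mul_assoc _ (e j), he.mul_eq]

omit [PartialOrder R] [StarOrderedRing R] in
lemma toMatrix_eq (he : IsOrthonormalFrame p e) (hp : IsMinimalProjection p) {a : R}
    {M : Matrix (Fin n) (Fin n) ℂ} (h : ∀ i j, star (e i) * a * e j = M i j • p) :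
    toMatrix hp e a = M :=
  Matrix.ext fun i j ↦ smul_left_injective ℂ hp.ne_zero <|
    (he.star_mul_mul_eq hp a i j).symm.trans (h i j)

omit [PartialOrder R] [StarOrderedRing R] in
lemma toMatrix_mul (he : IsOrthonormalFrame p e) (hp : IsMinimalProjection p)
    (hu : ∀ a, (∑ k, e k * star (e k)) * a = a) (a b : R) :
    toMatrix hp e (a * b) = toMatrix hp e a * toMatrix hp e b :=
  he.toMatrix_eq hp fun i j ↦ by
    calc star (e i) * (a * b) * e j
        = star (e i) * (a * ((∑ k, e k * star (e k)) * b)) * e j := by rw [hu]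
      _ = ∑ k, star (e i) * a * e k * (star (e k) * b * e j) := by
        simp only [Finset.sum_mul, Finset.mul_sum, mul_assoc]
      _ = (toMatrix hp e a * toMatrix hp e b) i j • p := by
        simp only [he.star_mul_mul_eq hp, smul_mul_smul_comm, hp.mul_self, Matrix.mul_apply,
          Finset.sum_smul]

omit [PartialOrder R] [StarOrderedRing R] in
lemma toMatrix_sum (he : IsOrthonormalFrame p e) (hp : IsMinimalProjection p)
    (M : Matrix (Fin n) (Fin n) ℂ) :
    toMatrix hp e (∑ i, ∑ j, M i j • (e i * star (e j))) = M :=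
  he.toMatrix_eq hp fun k l ↦ by
    simp only [Finset.mul_sum, Finset.sum_mul, mul_smul_comm, smul_mul_assoc, ← mul_assoc,
      he.star_mul_eq, ite_mul, zero_mul, smul_ite, smul_zero]
    simp [he.mul_star_eq hp, he.star_mul_eq]

omit [PartialOrder R] [StarOrderedRing R] in
lemma sum_toMatrix (he : IsOrthonormalFrame p e) (hp : IsMinimalProjection p)
    (hu : ∀ a, (∑ k, e k * star (e k)) * a = a) (a : R) :
    ∑ i, ∑ j, toMatrix hp e a i j • (e i * star (e j)) = a := by
  have hu_star : star (∑ k, e k * star (e k)) = ∑ k, e k * star (e k) := by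
    simp only [star_sum, star_mul, star_star]
  calc ∑ i, ∑ j, toMatrix hp e a i j • (e i * star (e j))
      = ∑ i, ∑ j, e i * (star (e i) * a * e j) * star (e j) := by
        simp only [he.star_mul_mul_eq hp, mul_smul_comm, smul_mul_assoc, he.mul_eq]
    _ = (∑ k, e k * star (e k)) * a * ∑ k, e k * star (e k) := by
        simp only [Finset.sum_mul, Finset.mul_sum, mul_assoc]
        exact Finset.sum_comm
    _ = a := by rw [hu, ← star_star a, ← hu_star, ← star_mul, hu]

/-- The isomorphism onto a full matrix algebra given by a complete orthonormal frame. -/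
def matrixEquiv (he : IsOrthonormalFrame p e) (hp : IsMinimalProjection p)
    (hu : ∀ a, (∑ k, e k * star (e k)) * a = a) : R ≃⋆ₐ[ℂ] Matrix (Fin n) (Fin n) ℂ where
  toFun := toMatrix hp e
  invFun M := ∑ i, ∑ j, M i j • (e i * star (e j))
  left_inv := he.sum_toMatrix hp hu
  right_inv := he.toMatrix_sum hp
  map_mul' := he.toMatrix_mul hp hu
  map_add' a b := he.toMatrix_eq hp fun i j ↦ by
    rw [mul_add, add_mul, he.star_mul_mul_eq hp, he.star_mul_mul_eq hp, Matrix.add_apply, add_smul]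
  map_smul' c a := he.toMatrix_eq hp fun i j ↦ by
    rw [mul_smul_comm, smul_mul_assoc, he.star_mul_mul_eq hp, Matrix.smul_apply, smul_smul,
      smul_eq_mul]
  map_star' a := he.toMatrix_eq hp fun i j ↦ by
    have h := congrArg star (he.star_mul_mul_eq hp a j i)
    rwa [star_mul, star_mul, star_star, star_smul, hp.star_eq, ← mul_assoc] at h

end IsOrthonormalFrame

omit [PartialOrder R] [StarOrderedRing R] in
lemma isElementary_of_starAlgEquiv_matrix {n : ℕ} (φ : R ≃⋆ₐ[ℂ] Matrix (Fin n) (Fin n) ℂ) :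
    IsElementary R := by
  let Φ : R ≃⋆ₐ[ℂ] (EuclideanSpace ℂ (Fin n) →L[ℂ] EuclideanSpace ℂ (Fin n)) :=
    φ.trans Matrix.toEuclideanCLM
  refine ⟨EuclideanSpace ℂ (Fin n), inferInstance, inferInstance, inferInstance, Φ, Φ.injective,
    ?_⟩
  have hid : IsCompactOperator (id : EuclideanSpace ℂ (Fin n) → EuclideanSpace ℂ (Fin n)) :=
    (isCompactOperator_id_iff_finiteDimensional (𝕜 := ℂ)).mpr inferInstance
  exact (Φ.surjective.range_eq).trans (Set.eq_univ_of_forall fun T ↦ hid.comp_clm T).symm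

lemma IsMinimalProjection.isElementary {p : R} (hp : IsMinimalProjection p) (hσ : SigmaUnital R)
    (hs : IsSimpleCStar R) (halg : pedersen R = Set.univ) : IsElementary R := by
  have := hp.finiteDimensional hσ hs halg
  obtain ⟨n, e, he, hu⟩ := hp.exists_frame
  refine isElementary_of_starAlgEquiv_matrix (he.matrixEquiv hp fun a ↦ ?_)
  have ha : a ∈ Submodule.span ℂ {z : R | ∃ x y, z = x * p * y} :=
    hs.span_mul_mul_eq_top halg hp.ne_zero hp.mul_self ▸ Submodule.mem_top
  induction ha using Submodule.span_induction with
  | mem _ h =>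
    obtain ⟨x, y, rfl⟩ := h
    rw [← mul_assoc, hu]
  | zero => simp
  | add x y _ _ hx hy => rw [mul_add, hx, hy]
  | smul k x _ hx => rw [mul_smul_comm, hx]

lemma exists_mul_self_eq_zero (hσ : SigmaUnital R) (hs : IsSimpleCStar R)
    (hne : ¬ IsElementary R) (halg : pedersen R = Set.univ) {c : R} (hc : 0 ≤ c) (hc0 : c ≠ 0) :
    ∃ w, c * w * c ≠ 0 ∧ c * w * c * (c * w * c) = 0 := by
  by_contra! h
  have hred : HasReducedCorner c := fun w ↦ not_imp_not.mp (h w)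
  exact hne ((hred.isMinimalProjection hs hc hc0).isElementary hσ hs halg)

/-! ### Elements of small dimension -/

namespace Stabilization

variable (SB : Stabilization A W)

omit [PartialOrder A] [StarOrderedRing A] [PartialOrder W] [StarOrderedRing W] in
lemma mem_of_isClosed {V : Submodule ℂ W} (hV : IsClosed (V : Set W))
    (h : ∀ i j a, SB.emb i j a ∈ V) (w : W) : w ∈ V :=
  closure_minimal (Submodule.span_le.mpr <| by rintro _ ⟨i, j, a, rfl⟩; exact h i j a) hV
    (SB.dense_span w)

omit [PartialOrder A] [StarOrderedRing A] [PartialOrder W] [StarOrderedRing W] in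
lemma isometry_emb (i j : ℕ) : Isometry (SB.emb i j) :=
  AddMonoidHomClass.isometry_of_norm _ (SB.norm_emb i j)

omit [PartialOrder A] [StarOrderedRing A] [PartialOrder W] [StarOrderedRing W] in
lemma exists_emb_mul_mul_emb_eq (j k : ℕ) (s t : A) (w : W) :
    ∃ x, SB.emb 0 j s * w * SB.emb k 0 t = SB.emb 0 0 x := by
  let T : W →ₗ[ℂ] W :=
    (LinearMap.mulRight ℂ (SB.emb k 0 t)).comp (LinearMap.mulLeft ℂ (SB.emb 0 j s))
  have hT : Continuous T := by
    change Continuous fun w ↦ SB.emb 0 j s * w * SB.emb k 0 t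
    fun_prop
  have hrange : IsClosed ((LinearMap.range (SB.emb 0 0) : Submodule ℂ W) : Set W) := by
    rw [LinearMap.coe_range]
    exact (SB.isometry_emb 0 0).isClosedEmbedding.isClosed_range
  obtain ⟨x, hx⟩ := SB.mem_of_isClosed (V := (LinearMap.range (SB.emb 0 0)).comap T)
    (hrange.preimage hT) (fun i l a ↦ by
      change SB.emb 0 j s * SB.emb i l a * SB.emb k 0 t ∈ LinearMap.range (SB.emb 0 0)
      rw [SB.emb_mul, ite_mul, SB.emb_mul, zero_mul]
      split_ifs
      exacts [⟨_, rfl⟩, zero_mem _, zero_mem _]) w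
  exact ⟨x, hx.symm⟩

omit [PartialOrder A] [StarOrderedRing A] [PartialOrder W] [StarOrderedRing W] in
lemma exists_mul_emb_ne_zero {c : W} (hc : c ≠ 0) : ∃ j t, c * SB.emb j 0 t ≠ 0 := by
  by_contra! h
  have hker : IsClosed ((LinearMap.ker (LinearMap.mulLeft ℂ c) : Submodule ℂ W) : Set W) :=
    isClosed_singleton.preimage (f := fun w ↦ c * w) (by fun_prop)
  have hcc := SB.mem_of_isClosed hker (fun i l a ↦ by
    change c * SB.emb i l a = 0
    rw [← CStarRing.mul_star_self_eq_zero_iff]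
    calc c * SB.emb i l a * star (c * SB.emb i l a)
        = c * (SB.emb i l a * SB.emb l i (star a)) * star c := by
          simp only [star_mul, SB.emb_star, mul_assoc]
      _ = c * (SB.emb i 0 a * SB.emb 0 i (star a)) * star c := by
          simp only [SB.emb_mul, if_true]
      _ = c * SB.emb i 0 a * (SB.emb 0 i (star a) * star c) := by simp only [mul_assoc]
      _ = 0 := by rw [h, zero_mul]) (star c)
  exact hc ((CStarRing.mul_star_self_eq_zero_iff c).mp hcc)

end Stabilization

lemma two_mul_dTau_star_mul_self_le (τ : QuasiTrace R) {y w : R} (hy : 0 ≤ y)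
    (hw : y * w * y * (y * w * y) = 0) :
    2 * dTau τ (star (y * w * y) * (y * w * y)) ≤ dTau τ y := by
  have hys : star y = y := (IsSelfAdjoint.of_nonneg hy).star_eq
  set u := y * w * y with hu
  calc 2 * dTau τ (star u * u) = dTau τ (star u * u) + dTau τ (u * star u) := by
        rw [two_mul, ← dTau_star_mul_self]
    _ = dTau τ (star u * u + u * star u) :=
        (dTau_add_of_mul_eq_zero τ (star_mul_self_nonneg u) (mul_star_self_nonneg u)
          (by rw [mul_assoc, ← mul_assoc u u, hw, zero_mul, mul_zero])).symm
    _ ≤ dTau τ y := by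
        refine dTau_le_of_mem_her τ hy
          (add_nonneg (star_mul_self_nonneg u) (mul_star_self_nonneg u)) (subset_closure
            ⟨star w * y * (y * w) + w * y * (y * star w), ?_⟩)
        simp only [hu, star_mul, hys, mul_assoc, mul_add, add_mul]

lemma Stabilization.exists_two_mul_dTau_le (SB : Stabilization A W) (hσ : SigmaUnital A)
    (hs : IsSimpleCStar A) (hne : ¬ IsElementary A) (halg : pedersen A = Set.univ) {y : A}
    (hy : 0 ≤ y) (hy0 : y ≠ 0) :
    ∃ m, 0 ≤ y * m * y ∧ y * m * y ≠ 0 ∧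
      ∀ τ : QuasiTrace W, 2 * dTau τ (SB.emb 0 0 (y * m * y)) ≤ dTau τ (SB.emb 0 0 y) := by
  obtain ⟨w, hw0, hw⟩ := exists_mul_self_eq_zero hσ hs hne halg hy hy0
  have hm : star (y * w * y) * (y * w * y) = y * (star w * y * (y * w)) * y := by
    simp only [star_mul, (IsSelfAdjoint.of_nonneg hy).star_eq, mul_assoc]
  refine ⟨star w * y * (y * w), hm ▸ star_mul_self_nonneg _, ?_, fun τ ↦ ?_⟩
  · rwa [← hm, Ne, CStarRing.star_mul_self_eq_zero_iff]
  · have hW : SB.diagonalHom 0 y * SB.diagonalHom 0 w * SB.diagonalHom 0 y *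
        (SB.diagonalHom 0 y * SB.diagonalHom 0 w * SB.diagonalHom 0 y) = 0 := by
      simp only [← map_mul, hw, _root_.map_zero]
    have h := two_mul_dTau_star_mul_self_le τ (map_nonneg (SB.diagonalHom 0) hy) hW
    simp only [← map_mul, ← map_star] at h
    rwa [hm] at h

-- The square-zero elements are found one below the other, each halving the dimension.
lemma Stabilization.exists_two_pow_mul_dTau_le (SB : Stabilization A W) (hσ : SigmaUnital A)
    (hs : IsSimpleCStar A) (hne : ¬ IsElementary A) (halg : pedersen A = Set.univ) {x : A}
    (hx : IsSelfAdjoint x) (hx0 : x ≠ 0) (k : ℕ) :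
    ∃ m, 0 ≤ x * m * x ∧ x * m * x ≠ 0 ∧
      ∀ τ ∈ closure (QTSet SB), 2 ^ k * dTau τ (SB.emb 0 0 (x * m * x)) ≤ 1 := by
  induction k with
  | zero =>
    have hxx : star (x * x) * (x * x) = x * (x * x) * x := by
      simp only [star_mul, hx.star_eq, mul_assoc]
    have hpos : 0 ≤ x * (x * x) * x := hxx ▸ star_mul_self_nonneg _
    refine ⟨x * x, hpos, ?_, fun τ hτ ↦ ?_⟩
    · rw [← hxx, Ne, CStarRing.star_mul_self_eq_zero_iff]
      nth_rw 1 [← hx.star_eq]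
      rwa [CStarRing.star_mul_self_eq_zero_iff]
    · rw [pow_zero, one_mul]
      exact dTau_le_of_mem_closure (SB.emb_nonneg 0 hpos)
        (fun _ hτ ↦ SB.dTau_emb_zero_le_one hτ hpos) hτ
  | succ k ih =>
    obtain ⟨m, hpos, hne0, hm⟩ := ih
    obtain ⟨m', hpos', hne0', hm'⟩ := SB.exists_two_mul_dTau_le hσ hs hne halg hpos hne0
    have heq : x * m * x * m' * (x * m * x) = x * (m * x * m' * (x * m)) * x := by
      simp only [mul_assoc]
    rw [heq] at hpos' hne0' hm'
    refine ⟨_, hpos', hne0', fun τ hτ ↦ ?_⟩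
    calc _ = 2 ^ k * (2 * dTau τ (SB.emb 0 0 (x * (m * x * m' * (x * m)) * x))) := by
          rw [pow_succ, mul_assoc]
      _ ≤ 2 ^ k * dTau τ (SB.emb 0 0 (x * m * x)) := by gcongr; exact hm' τ
      _ ≤ 1 := hm τ hτ

lemma mul_eq_zero_of_star_mul_mul_eq_zero {z x : R} (hz : 0 ≤ z) (h : star x * z * x = 0) :
    z * x = 0 := by
  obtain ⟨r, rfl⟩ := CStarAlgebra.nonneg_iff_eq_star_mul_self.mp hz
  have hrx : r * x = 0 := by
    rw [← CStarRing.star_mul_self_eq_zero_iff, star_mul, ← h]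
    simp only [mul_assoc]
  rw [mul_assoc, hrx, mul_zero]

lemma Stabilization.exists_ne_zero_dTau_le (SB : Stabilization A W) (hσ : SigmaUnital A)
    (hs : IsSimpleCStar A) (hne : ¬ IsElementary A) (halg : pedersen A = Set.univ) {c : W}
    (hc : IsSelfAdjoint c) (hc0 : c ≠ 0) {κ : ℝ≥0∞} (hκ : 0 < κ) :
    ∃ m, 0 ≤ c * m * c ∧ c * m * c ≠ 0 ∧
      ∀ τ ∈ closure (QTSet SB), dTau τ (c * m * c) ≤ κ := by
  obtain ⟨j, t, hv⟩ := SB.exists_mul_emb_ne_zero hc0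
  set v := c * SB.emb j 0 t with hv_def
  have hv_star : star v = SB.emb 0 j (star t) * c := by
    rw [hv_def, star_mul, SB.emb_star, hc.star_eq]
  obtain ⟨x, hx⟩ := SB.exists_emb_mul_mul_emb_eq j j (star t) t (c * c)
  replace hx : star v * v = SB.emb 0 0 x := by
    rw [← hx, hv_star, hv_def]; simp only [mul_assoc]
  have hemb := (SB.isometry_emb 0 0).injective
  have hxs : IsSelfAdjoint x := hemb <| by rw [← SB.emb_star, ← hx, star_mul, star_star]
  have hx0 : x ≠ 0 := by
    rintro rfl
    rw [_root_.map_zero, CStarRing.star_mul_self_eq_zero_iff] at hx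
    exact hv hx
  obtain ⟨k, hk⟩ := ENNReal.exists_inv_two_pow_lt hκ.ne'
  obtain ⟨m, hz, hz0, hm⟩ := SB.exists_two_pow_mul_dTau_le hσ hs hne halg hxs hx0 k
  set z := x * m * x with hz_def
  have hzW := SB.emb_nonneg 0 hz
  have hd : c * (SB.emb j 0 t * SB.emb 0 0 z * SB.emb 0 j (star t)) * c =
      star (star v) * SB.emb 0 0 z * star v := by
    rw [hv_star, star_mul, hc.star_eq, SB.emb_star, star_star]
    simp only [mul_assoc]
  refine ⟨_, hd ▸ star_left_conjugate_nonneg hzW _, fun h ↦ hz0 ?_, fun τ hτ ↦ ?_⟩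
  · have hzv := mul_eq_zero_of_star_mul_mul_eq_zero hzW (hd.symm.trans h)
    have hzx : z * x = 0 := hemb <| by
      rw [_root_.map_zero, ← zero_mul v, ← hzv, mul_assoc (SB.emb 0 0 z), hx, SB.emb_mul,
        if_pos rfl]
    rw [← CStarRing.star_mul_self_eq_zero_iff, (IsSelfAdjoint.of_nonneg hz).star_eq]
    nth_rw 2 [hz_def]
    rw [mul_assoc x, ← mul_assoc, hzx, zero_mul]
  · have hzκ : dTau τ (SB.emb 0 0 z) ≤ (2⁻¹) ^ k := by
      rw [← ENNReal.inv_pow, ← one_div, ENNReal.le_div_iff_mul_le (by simp) (by simp), mul_comm]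
      exact hm τ hτ
    exact hd ▸ (dTau_star_mul_mul_le τ hzW _).trans (hzκ.trans hk.le)

lemma Stabilization.exists_norm_eq_one_dTau_le (SB : Stabilization A W) (hσ : SigmaUnital A)
    (hs : IsSimpleCStar A) (hne : ¬ IsElementary A) (halg : pedersen A = Set.univ) {c : W}
    (hc : IsSelfAdjoint c) (hc0 : c ≠ 0) {κ : ℝ≥0∞} (hκ : 0 < κ) :
    ∃ m, 0 ≤ c * m * c ∧ ‖c * m * c‖ = 1 ∧
      ∀ τ ∈ closure (QTSet SB), dTau τ (c * m * c) ≤ κ := by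
  obtain ⟨m, hd, hd0, hm⟩ := SB.exists_ne_zero_dTau_le hσ hs hne halg hc hc0 hκ
  have hsmul : c * (‖c * m * c‖⁻¹ • m) * c = ‖c * m * c‖⁻¹ • (c * m * c) := by
    rw [mul_smul_comm, smul_mul_assoc]
  have hinv : 0 ≤ ‖c * m * c‖⁻¹ := inv_nonneg.mpr (norm_nonneg _)
  have hnorm : ‖‖c * m * c‖⁻¹ • (c * m * c)‖ = 1 := by
    rw [norm_smul, norm_inv, norm_norm, inv_mul_cancel₀ (norm_ne_zero_iff.mpr hd0)]
  refine ⟨‖c * m * c‖⁻¹ • m, ?_⟩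
  rw [hsmul]
  exact ⟨smul_nonneg hinv hd, hnorm, fun τ hτ ↦
    (dTau_le_of_le_smul τ hd (smul_nonneg hinv hd) hinv le_rfl).trans (hm τ hτ)⟩

/-! ### Splitting off a small orthogonal piece -/

lemma fEps_ne_zero {x : R} (hx : 0 ≤ x) {ε : ℝ} (hε : 0 < ε) (h : ε ≤ ‖x‖) : fEps ε x ≠ 0 := by
  intro h0
  have hzero : cfcₙ (cutoff ε) x = cfcₙ (fun _ : ℝ ↦ (0 : ℝ)) x := by
    rw [cfcₙ_const_zero]; exact h0
  have hEq := eqOn_of_cfcₙ_eq_cfcₙ hzero (.of_nonneg hx) (continuous_cutoff _).continuousOn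
    (cutoff_zero _) continuousOn_const rfl (norm_mem_quasispectrum hx)
  rw [cutoff_eq_one_of_le hε h] at hEq
  exact one_ne_zero hEq

lemma mem_her_of_fEps_mul_eq {b z : R} (hb : 0 ≤ b) {ε : ℝ} (hε : 0 < ε) (hz : IsSelfAdjoint z)
    (h : fEps ε b * z = z) : z ∈ her b := by
  obtain ⟨g, hg⟩ := exists_cfcₙ_eq_mul_cfcₙ (.of_nonneg hb) (continuous_cutoff ε) (half_pos hε)
    fun t ↦ cutoff_eq_zero_of_le hε
  refine subset_closure ⟨cfcₙ g b * z * star (cfcₙ g b), ?_⟩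
  calc z = fEps ε b * z * star (fEps ε b) := by
        rw [h]; simpa [hz.star_eq] using (congrArg star h).symm
    _ = b * (cfcₙ g b * z * star (cfcₙ g b)) * b := by
        rw [fEps, hg, star_mul, (IsSelfAdjoint.of_nonneg hb).star_eq]
        simp only [mul_assoc]

omit [PartialOrder R] [StarOrderedRing R] in
lemma commute_of_mul_eq_right {e f : R} (he : IsSelfAdjoint e) (hf : IsSelfAdjoint f)
    (h : e * f = f) : Commute e f :=
  (he.commute_iff hf).mpr (by rwa [h])

lemma le_of_mul_eq_right {e f : R} (he : 0 ≤ e) (he1 : ‖e‖ ≤ 1) (hf : 0 ≤ f) (hf1 : ‖f‖ ≤ 1)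
    (h : e * f = f) : f ≤ e := by
  have hes : star e = e := (IsSelfAdjoint.of_nonneg he).star_eq
  have hfe : f * e = f := (commute_of_mul_eq_right (.of_nonneg he) (.of_nonneg hf) h).symm.trans h
  calc f = star e * f * e := by rw [hes, h, hfe]
    _ ≤ ‖f‖ • (star e * e) :=
        CStarAlgebra.star_left_conjugate_le_norm_smul (hb := .of_nonneg hf)
    _ ≤ (1 : ℝ) • (star e * e) := smul_le_smul_of_nonneg_right hf1 (star_mul_self_nonneg e)
    _ ≤ e := by rw [one_smul, hes]; exact mul_self_le_self_of_nonneg he he1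

omit [PartialOrder R] [StarOrderedRing R] in
lemma mul_fEps_eq_of_mul_eq {d e : R} (hd : IsSelfAdjoint d) (hed : e * d = d) {ε : ℝ}
    (hε : 0 < ε) : e * fEps ε d = fEps ε d :=
  mul_cfcₙ_eq_of_mul_eq hd hed (continuous_cutoff ε) (half_pos hε) fun _ ↦ cutoff_eq_zero_of_le hε

lemma fEps_sub_fEps_mem_her {b d : R} (hb : 0 ≤ b) (hd : IsSelfAdjoint d) {ε η : ℝ} (hε : 0 < ε)
    (hη : 0 < η) (hed : fEps ε b * d = d) : fEps ε b - fEps η d ∈ her b := by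
  refine mem_her_of_fEps_mul_eq hb (half_pos hε)
    (.sub (.of_nonneg (fEps_nonneg _ _)) (.of_nonneg (fEps_nonneg _ _))) ?_
  rw [mul_sub, fEps_half_mul_fEps hε hb, ← mul_fEps_eq_of_mul_eq hd hed hη, ← mul_assoc,
    fEps_half_mul_fEps hε hb]

lemma sub_fEps_mul_fEps_eq_zero {d e : R} (hd : 0 ≤ d) (hed : e * d = d) {ε : ℝ} (hε : 0 < ε) :
    (e - fEps (ε / 2) d) * fEps ε d = 0 := by
  rw [sub_mul, mul_fEps_eq_of_mul_eq (.of_nonneg hd) hed hε, fEps_half_mul_fEps hε hd, sub_self]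

lemma apply_le_dTau_fEps_add (τ : QuasiTrace R) {x : R} (hx : 0 ≤ x) (hx1 : ‖x‖ ≤ 1) {δ : ℝ}
    (hδ : 0 < δ) : τ.toFun x ≤ dTau τ (fEps δ x) + ENNReal.ofReal δ * dTau τ x := by
  have hcut : Continuous fun t ↦ cutoff 1 (cutoff δ t) :=
    (continuous_cutoff 1).comp (continuous_cutoff δ)
  have hcut0 : cutoff 1 (cutoff δ 0) = 0 := by rw [cutoff_zero, cutoff_zero]
  have hmin : Continuous fun t : ℝ ↦ min t δ := by fun_prop
  have hmin0 : min 0 δ = 0 := min_eq_left hδ.le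
  have hle : ∀ t, 0 ≤ t → t ≤ ‖x‖ → t ≤ cutoff 1 (cutoff δ t) + min t δ := by
    intro t _ _
    rcases le_total δ t with h | h
    · rw [cutoff_eq_one_of_le hδ h, cutoff_eq_one_of_le one_pos le_rfl, min_eq_right h]
      linarith
    · rw [min_eq_left h]
      exact le_add_of_nonneg_left (cutoff_nonneg _ _)
  calc τ.toFun x = τ.toFun (cfcₙ (fun t : ℝ ↦ t) x) := by rw [cfcₙ_id' ℝ x]
    _ ≤ τ.toFun (cfcₙ (fun t ↦ cutoff 1 (cutoff δ t) + min t δ) x) :=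
        τ.isQuasitracial.map_cfcₙ_le hx continuous_id rfl (hcut.add hmin)
          (by rw [hcut0, hmin0, add_zero]) (fun t ht _ ↦ ht) hle
    _ = τ.toFun (fEps 1 (fEps δ x)) + τ.toFun (cfcₙ (fun t ↦ min t δ) x) := by
        rw [τ.isQuasitracial.map_cfcₙ_add hx hcut hcut0 hmin hmin0 (fun t _ ↦ cutoff_nonneg _ _)
          (fun t ht ↦ le_min ht hδ.le), fEps, fEps, ← cfcₙ_comp' (cutoff 1) (cutoff δ) x
          (continuous_cutoff 1).continuousOn (cutoff_zero 1) (continuous_cutoff δ).continuousOn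
          (cutoff_zero δ)]
    _ ≤ dTau τ (fEps δ x) + ENNReal.ofReal δ * dTau τ x :=
        add_le_add (apply_fEps_le_dTau τ (fEps_nonneg δ x) one_pos)
          (apply_cfcₙ_le_mul_dTau τ hx hmin hmin0 hδ (fun t ht _ ↦ le_min ht hδ.le)
            fun t _ _ ↦ min_le_right _ _)

lemma apply_le_dTau (τ : QuasiTrace R) {x : R} (hx : 0 ≤ x) (hx1 : ‖x‖ ≤ 1) :
    τ.toFun x ≤ dTau τ x := by
  simpa [cfcₙ_id' ℝ x] using apply_cfcₙ_le_mul_dTau τ hx (f := fun t ↦ t) continuous_id rfl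
    one_pos (fun t ht _ ↦ ht) fun t _ ht ↦ ht.trans hx1

lemma exists_ofReal_mul_le {η : ℝ} (hη : 0 < η) (N : ℕ) {κ : NNReal} (hκ : 0 < κ) :
    ∃ δ : ℝ, 0 < δ ∧ δ < η ∧ ENNReal.ofReal δ * N ≤ κ := by
  obtain ⟨δ, hδ, hδη⟩ := exists_between (lt_min hη (div_pos (NNReal.coe_pos.mpr hκ)
    (Nat.cast_add_one_pos N)))
  obtain ⟨hδη, hδN⟩ := lt_min_iff.mp hδη
  rw [lt_div_iff₀ (Nat.cast_add_one_pos N)] at hδN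
  refine ⟨δ, hδ, hδη, ?_⟩
  rw [← ENNReal.ofReal_natCast, ← ENNReal.ofReal_mul hδ.le, ← ENNReal.ofReal_coe_nnreal]
  exact ENNReal.ofReal_le_ofReal (by linarith)

lemma exists_dTau_lt_dTau_fEps_sub {S : Set (QuasiTrace R)} {a e f : R} (he : 0 ≤ e)
    (he1 : ‖e‖ ≤ 1) (hf : 0 ≤ f) (hfe : f ≤ e) (hcomm : Commute e f) {N : ℕ}
    (hN : ∀ τ ∈ S, dTau τ e ≤ N) {κ : NNReal} (hκ : 0 < κ)
    (hgap : ∀ τ ∈ S, dTau τ a + κ ≤ τ.toFun e) (hfκ : ∀ τ ∈ S, τ.toFun f ≤ (κ / 3 : NNReal))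
    {η : ℝ} (hη : 0 < η) :
    ∃ δ : ℝ, 0 < δ ∧ δ < η ∧ ∀ τ ∈ S, dTau τ a < dTau τ (fEps δ (e - f)) := by
  have hκ3 : 0 < κ / 3 := by positivity
  obtain ⟨δ, hδ, hδη, hδN⟩ := exists_ofReal_mul_le hη N hκ3
  have hsub : 0 ≤ e - f := sub_nonneg.mpr hfe
  have hsube : e - f ≤ e := sub_le_self _ hf
  have hsub1 : ‖e - f‖ ≤ 1 := (CStarAlgebra.norm_le_norm_of_nonneg_of_le hsub hsube).trans he1
  refine ⟨δ, hδ, hδη, fun τ hτ ↦ ?_⟩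
  have hcut : ENNReal.ofReal δ * dTau τ (e - f) ≤ (κ / 3 : NNReal) := by
    refine le_trans ?_ hδN
    gcongr
    exact (dTau_le_of_le_smul τ he hsub zero_le_one (by rwa [one_smul])).trans (hN τ hτ)
  have hle : dTau τ a + κ ≤ dTau τ (fEps δ (e - f)) + (κ / 3 + κ / 3 : NNReal) :=
    calc dTau τ a + κ ≤ τ.toFun (e - f + f) := by rw [sub_add_cancel]; exact hgap τ hτ
      _ = τ.toFun (e - f) + τ.toFun f :=
          τ.map_add_of_commute _ _ hsub hf (hcomm.sub_left (Commute.refl f))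
      _ ≤ dTau τ (fEps δ (e - f)) + (κ / 3 : NNReal) + (κ / 3 : NNReal) :=
          add_le_add ((apply_le_dTau_fEps_add τ hsub hsub1 hδ).trans (by gcongr)) (hfκ τ hτ)
      _ = _ := by rw [add_assoc, ENNReal.coe_add]
  have hfin : dTau τ a ≠ ∞ := ((le_self_add.trans (hgap τ hτ)).trans
    ((apply_le_dTau τ he he1).trans (hN τ hτ))).trans_lt (ENNReal.natCast_lt_top N) |>.ne
  have hlt : κ / 3 + κ / 3 < κ := by
    rw [← NNReal.coe_lt_coe]; push_cast; linarith [NNReal.coe_pos.mpr hκ]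
  exact lt_of_not_ge fun hge ↦ (ENNReal.coe_lt_coe.mpr hlt).not_ge <|
    (ENNReal.add_le_add_iff_left hfin).mp (hle.trans (by gcongr))

lemma exists_orthogonal_dominating_of_fEps_mul_eq {S : Set (QuasiTrace R)} (hS : S.Nonempty)
    {a b d : R} (hb : 0 ≤ b) {ε : ℝ} (hε : 0 < ε) (hd : 0 ≤ d) (hd1 : ‖d‖ = 1)
    (hed : fEps ε b * d = d) {N : ℕ} (hN : ∀ τ ∈ S, dTau τ (fEps ε b) ≤ N) {κ : NNReal}
    (hκ : 0 < κ) (hgap : ∀ τ ∈ S, dTau τ a + κ ≤ τ.toFun (fEps ε b))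
    (hdκ : ∀ τ ∈ S, dTau τ d ≤ (κ / 3 : NNReal)) {η : ℝ} (hη : 0 < η) :
    ∃ b₁ b₀ : R, ∃ δ : ℝ, 0 < δ ∧ δ < η ∧
      b₁ ∈ her b ∧ b₀ ∈ her b ∧ 0 ≤ b₁ ∧ 0 ≤ b₀ ∧ b₁ ≠ 0 ∧ b₀ ≠ 0 ∧
      ‖b₁‖ ≤ 1 ∧ ‖b₀‖ ≤ 1 ∧ b₁ * b₀ = 0 ∧ b₀ * b₁ = 0 ∧
      ∀ τ ∈ S, dTau τ a < dTau τ (fEps δ b₁) := by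
  have he : 0 ≤ fEps ε b := fEps_nonneg _ _
  have he1 : ‖fEps ε b‖ ≤ 1 := norm_fEps_le_one _ _
  have hf : 0 ≤ fEps (1 / 2) d := fEps_nonneg _ _
  have hef := mul_fEps_eq_of_mul_eq (.of_nonneg hd) hed one_half_pos
  have hfe : fEps (1 / 2) d ≤ fEps ε b := le_of_mul_eq_right he he1 hf (norm_fEps_le_one _ _) hef
  obtain ⟨δ, hδ, hδη, hlt⟩ := exists_dTau_lt_dTau_fEps_sub he he1 hf hfe
    (commute_of_mul_eq_right (.of_nonneg he) (.of_nonneg hf) hef) hN hκ hgap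
    (fun τ hτ ↦ (apply_fEps_le_dTau τ hd one_half_pos).trans (hdκ τ hτ)) hη
  have hb₁ : 0 ≤ fEps ε b - fEps (1 / 2) d := sub_nonneg.mpr hfe
  have hmul := sub_fEps_mul_fEps_eq_zero hd hed one_pos
  refine ⟨_, fEps 1 d, δ, hδ, hδη,
    fEps_sub_fEps_mem_her hb (.of_nonneg hd) hε one_half_pos hed,
    mem_her_of_fEps_mul_eq hb hε (.of_nonneg (fEps_nonneg _ _))
      (mul_fEps_eq_of_mul_eq (.of_nonneg hd) hed one_pos),
    hb₁, fEps_nonneg _ _, fun h ↦ ?_, fEps_ne_zero hd one_pos hd1.ge,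
    (CStarAlgebra.norm_le_norm_of_nonneg_of_le hb₁ (sub_le_self _ hf)).trans he1,
    norm_fEps_le_one _ _, hmul, mul_eq_zero_comm_of_nonneg hb₁ (fEps_nonneg _ _) hmul, hlt⟩
  obtain ⟨τ, hτ⟩ := hS
  have hzero : fEps δ (0 : R) = 0 := cfcₙ_apply_zero
  exact not_lt_zero (by simpa only [h, hzero, dTau_zero] using hlt τ hτ)

/-- **Corollary.** Let `A` be a σ-unital non-elementary algebraically simple C*-algebra with
`QT(A) ≠ ∅` and `a, b ∈ (A ⊗ K)₊` with `d_τ(a) < d_τ(b)` for all `τ ∈ \overline{QT(A)}^w` and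
`ω(a) = 0`.  Then there are mutually orthogonal nonzero positive contractions `b₁, b₀ ∈ Her(b)`
and `0 < δ < 1/4` with `d_τ(a) < d_τ(f_δ(b₁))` for all `τ ∈ \overline{QT(A)}^w`. -/
theorem exists_two_orthogonal_dominating_cutoff
    (SB : Stabilization A W)
    (hσ : SigmaUnital A) (hsimple : IsSimpleCStar A) (hne : ¬ IsElementary A)
    (halg : pedersen A = Set.univ) (hqt : (QTSet SB).Nonempty)
    (a b : W) (ha : 0 ≤ a) (hb : 0 ≤ b)
    (hlt : ∀ τ ∈ closure (QTSet SB), dTau τ a < dTau τ b)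
    (hω : omegaOn (closure (QTSet SB)) a = 0) :
    ∃ b₁ b₀ : W, ∃ δ : ℝ, 0 < δ ∧ δ < 1 / 4 ∧
      b₁ ∈ her b ∧ b₀ ∈ her b ∧ 0 ≤ b₁ ∧ 0 ≤ b₀ ∧ b₁ ≠ 0 ∧ b₀ ≠ 0 ∧
      ‖b₁‖ ≤ 1 ∧ ‖b₀‖ ≤ 1 ∧ b₁ * b₀ = 0 ∧ b₀ * b₁ = 0 ∧
      ∀ τ ∈ closure (QTSet SB), dTau τ a < dTau τ (fEps δ b₁) := by
  obtain ⟨n, κ, hκ, hgap⟩ :=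
    exists_dTau_add_le_apply_fEps SB.isCompact_closure_QTSet ha hb hω hlt
  have hε : (0 : ℝ) < 1 / (n + 1) := by positivity
  set c := fEps (1 / (n + 1)) b
  have hc : 0 ≤ c := fEps_nonneg _ _
  obtain ⟨τ₀, hτ₀⟩ := hqt.closure
  have hc0 : c ≠ 0 := fun h ↦ hκ.ne' <| by
    simpa [h, τ₀.map_zero] using le_add_self.trans (hgap τ₀ hτ₀)
  obtain ⟨m, hd, hd1, hdκ⟩ := SB.exists_norm_eq_one_dTau_le hσ hsimple hne halg (.of_nonneg hc)
    hc0 (ENNReal.coe_pos.mpr (by positivity : 0 < κ / 3))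
  set e := fEps (1 / (n + 1) / 2) b
  have hed : e * (c * m * c) = c * m * c := by
    rw [← mul_assoc, ← mul_assoc, fEps_half_mul_fEps hε hb]
  obtain ⟨N, hN⟩ := SB.exists_dTau_le_of_mem_pedersen (fEps_mem_pedersen hb (half_pos hε))
    (fEps_nonneg _ _)
  have hgap' : ∀ τ ∈ closure (QTSet SB), dTau τ a + κ ≤ τ.toFun e := fun τ hτ ↦
    (hgap τ hτ).trans
      (τ.isQuasitracial.map_fEps_anti hb (half_pos hε) (half_le_self hε.le))
  exact exists_orthogonal_dominating_of_fEps_mul_eq hqt.closure hb (half_pos hε) hd hd1 hed hN hκ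
    hgap' hdκ (by norm_num)

end Paper
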